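/- Let K be a field complete with respect to a nontrivial nonarchimedean absolute value, with ring of integers O_K, and let π ∈ O_K be a nonzero nonunit. Let R → S be a homomorphism of O_K-algebras such that π is a nonzerodivisor on both R and S, and suppose R is π-adically complete (R → lim_n R/π^n R is bijective). If R/πR → S/πS is faithfully flat and S/πS is a finitely presented R/πR-algebra, then R → S is a universal descent morphism. -/

import Mathlib

open CategoryTheory CategoryTheory.Pretriangulated

universe u

instance restrictScalarsAdditive {R S : Type u} [CommRing R] [CommRing S] (f : R →+* S) :
    (ModuleCat.restrictScalars.{u} f).Additive where
  map_add := rfl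

/-- `f : R →+* S` is a universal descent morphism if the smallest strictly full triangulated
subcategory of `D(R)` closed under direct summands and containing all restrictions of scalars
of objects of `D(S)` is all of `D(R)`. -/
def IsUniversalDescent {R S : Type u} [CommRing R] [CommRing S] (f : R →+* S) : Prop :=
  letI := HasDerivedCategory.standard (ModuleCat.{u} R)
  ∀ P : DerivedCategory (ModuleCat.{u} R) → Prop,
    (∀ X Y : DerivedCategory (ModuleCat.{u} R), (X ≅ Y) → P X → P Y) →
    (∀ X, P X → P (X⟦(1 : ℤ)⟧)) →
    (∀ X, P X → P (X⟦(-1 : ℤ)⟧)) →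
    (∀ T : Triangle (DerivedCategory (ModuleCat.{u} R)),
      (T ∈ distTriang (DerivedCategory (ModuleCat.{u} R))) →
      P T.obj₁ → P T.obj₂ → P T.obj₃) →
    (∀ (X Y : DerivedCategory (ModuleCat.{u} R)) (i : X ⟶ Y) (r : Y ⟶ X),
      i ≫ r = 𝟙 X → P Y → P X) →
    (∀ K : CochainComplex (ModuleCat.{u} S) ℤ,
      P (DerivedCategory.Q.obj
        (((ModuleCat.restrictScalars.{u} f).mapHomologicalComplex (ComplexShape.up ℤ)).obj K))) →
    ∀ X, P X


section Resol
open CategoryTheory Limits MorphismProperty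

lemma hasSmallObjArg_of_mono {C : Type*} [Category.{u} C] [Abelian C] [IsGrothendieckAbelian.{u} C]
    {ι : Type} (A B : ι → C) (f : ∀ i, A i ⟶ B i) (hf : ∀ i, Mono (f i)) :
    HasSmallObjectArgument.{u} (MorphismProperty.ofHoms f) := by
  obtain ⟨κ, hκ', hκ⟩ := HasCardinalLT.exists_regular_cardinal.{u} (Σ i, Subobject (A i))
  have : Fact κ.IsRegular := ⟨hκ'⟩
  have : Nonempty κ.ord.ToType := by simpa using hκ'.ne_zero
  have := WellFoundedLT.toOrderBot κ.ord.ToType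
  have hle : MorphismProperty.ofHoms f ≤ monomorphisms C := by
    rintro _ _ _ ⟨i⟩
    exact hf i
  exact ⟨κ, inferInstance, inferInstance,
    { isSmall := MorphismProperty.isSmall_ofHoms.{u} f
      preservesColimit {A' B' X Y} i hi f' hf' := by
        let hf' : (monomorphisms C).TransfiniteCompositionOfShape κ.ord.ToType f' :=
          { toTransfiniteCompositionOfShape := hf'.toTransfiniteCompositionOfShape
            map_mem j hj := by
              have := (hf'.attachCells j hj).pushouts_coproducts
              simp only [ofHoms_homFamily] at this
              refine (?_ : _ ≤ monomorphisms C) _ this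
              simp only [pushouts_le_iff, coproducts_le_iff]
              exact hle }
        have (j j' : κ.ord.ToType) (φ : j ⟶ j') : Mono (hf'.F.map φ) := hf'.mem_map φ
        apply IsGrothendieckAbelian.preservesColimit_coyoneda_obj_of_mono (Y := hf'.F) (κ := κ)
        obtain ⟨i⟩ := hi
        exact hκ.of_injective (fun x => (⟨i, x⟩ : Σ i, Subobject (A i)))
          (fun a b h => by simpa using h) }⟩

variable (R : Type u) [CommRing R]

noncomputable abbrev diskC (n : ℤ) : CochainComplex (ModuleCat.{u} R) ℤ :=
  HomologicalComplex.double (𝟙 (ModuleCat.of R R))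
    (show (ComplexShape.up ℤ).Rel n (n+1) by simp)

noncomputable abbrev sphereC (n : ℤ) : CochainComplex (ModuleCat.{u} R) ℤ :=
  (HomologicalComplex.single _ (ComplexShape.up ℤ) (n+1)).obj (ModuleCat.of R R)

noncomputable def sphereDisk (n : ℤ) : sphereC R n ⟶ diskC R n :=
  HomologicalComplex.mkHomFromSingle
    (HomologicalComplex.doubleXIso₁ (𝟙 (ModuleCat.of R R)) _ (by omega)).inv
    (fun k hk => by
      rw [HomologicalComplex.double_d_eq_zero₀ _ _ _ _ (by omega)]; simp)

instance (n : ℤ) : Mono (sphereDisk R n) := by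
  have : ∀ k, Mono ((sphereDisk R n).f k) := by
    intro k
    by_cases hk : k = n+1
    · subst hk
      simp only [sphereDisk, HomologicalComplex.mkHomFromSingle_f]
      infer_instance
    · constructor
      intro Z g h _
      exact (HomologicalComplex.isZero_single_obj_X _ _ _ _ hk).eq_of_tgt _ _
  exact HomologicalComplex.mono_of_mono_f _ this

abbrev genCof : MorphismProperty (CochainComplex (ModuleCat.{u} R) ℤ) :=
  MorphismProperty.ofHoms (sphereDisk R)

instance : HasSmallObjectArgument.{u} (genCof R) :=
  hasSmallObjArg_of_mono _ _ _ inferInstance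

variable {R}

lemma rlp_lift {L Y : CochainComplex (ModuleCat.{u} R) ℤ} (p : L ⟶ Y) (hp : (genCof R).rlp p)
    (n : ℤ) (z : ModuleCat.of R R ⟶ L.X (n+1)) (hz : ∀ k, (ComplexShape.up ℤ).Rel (n+1) k → z ≫ L.d (n+1) k = 0)
    (y : ModuleCat.of R R ⟶ Y.X n) (h : y ≫ Y.d n (n+1) = z ≫ p.f (n+1)) :
    ∃ x : ModuleCat.of R R ⟶ L.X n, x ≫ L.d n (n+1) = z ∧ x ≫ p.f n = y := by
  have hn : n ≠ n + 1 := by omega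
  let top : sphereC R n ⟶ L := HomologicalComplex.mkHomFromSingle z hz
  let bot : diskC R n ⟶ Y := HomologicalComplex.mkHomFromDouble _ hn y (y ≫ Y.d n (n+1))
    (by simp) (by simp)
  have sq : CommSq top (sphereDisk R n) p bot := by
    constructor
    apply HomologicalComplex.from_single_hom_ext
    simp [top, bot, sphereDisk, h]
  obtain ⟨⟨l, hl1, hl2⟩⟩ := ((hp _ (⟨n⟩)).sq_hasLift sq).exists_lift
  refine ⟨(HomologicalComplex.doubleXIso₀ _ _).inv ≫ l.f n, ?_, ?_⟩
  · have h1 : (HomologicalComplex.singleObjXSelf _ _ _).inv ≫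
        (sphereDisk R n ≫ l).f (n+1) = z := by
      rw [hl1]; simp [top]
    rw [HomologicalComplex.comp_f] at h1
    simp only [sphereDisk, HomologicalComplex.mkHomFromSingle_f, Category.assoc,
      Iso.inv_hom_id_assoc] at h1
    rw [Category.assoc, l.comm, HomologicalComplex.double_d _ _ hn]
    simpa using h1
  · have h1 : (l ≫ p).f n = bot.f n := by rw [hl2]
    rw [HomologicalComplex.comp_f] at h1
    rw [Category.assoc, h1]
    simp [bot]

lemma rlp_of_lift {L Y : CochainComplex (ModuleCat.{u} R) ℤ} (p : L ⟶ Y)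
    (H : ∀ (n : ℤ) (z : ModuleCat.of R R ⟶ L.X (n+1)) (hz : ∀ k, (ComplexShape.up ℤ).Rel (n+1) k → z ≫ L.d (n+1) k = 0)
    (y : ModuleCat.of R R ⟶ Y.X n) (h : y ≫ Y.d n (n+1) = z ≫ p.f (n+1)),
    ∃ x : ModuleCat.of R R ⟶ L.X n, x ≫ L.d n (n+1) = z ∧ x ≫ p.f n = y) :
    (genCof R).rlp p := by
  rintro _ _ _ ⟨n⟩
  have hn : n ≠ n + 1 := by omega
  constructor
  intro top bot sq
  have e := congrArg (fun g => (HomologicalComplex.singleObjXSelf _ _ _).inv ≫ HomologicalComplex.Hom.f g (n+1)) sq.w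
  simp [sphereDisk] at e
  obtain ⟨x, hx1, hx2⟩ := H n ((HomologicalComplex.singleObjXSelf _ _ _).inv ≫ top.f (n+1))
    (by intro k hk; simp) ((HomologicalComplex.doubleXIso₀ _ _).inv ≫ bot.f n) (by
      rw [Category.assoc, Category.assoc, bot.comm, HomologicalComplex.double_d _ _ hn, e]
      simp)
  refine ⟨⟨HomologicalComplex.mkHomFromDouble _ hn x (x ≫ L.d n (n+1)) (by simp) (by simp), ?_, ?_⟩⟩
  · apply HomologicalComplex.from_single_hom_ext
    simp [sphereDisk, hx1]
  · apply HomologicalComplex.from_double_hom_ext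
    · simp [hx2]
    · simp
      rw [← p.comm, reassoc_of% hx2, bot.comm, HomologicalComplex.double_d _ _ hn]
      simp

/-- a contractible complex with all terms equal to `B` -/
def contr (n : ℤ) (B : ModuleCat.{u} R) : CochainComplex (ModuleCat.{u} R) ℤ where
  X _ := B
  d i j := if i + 1 = j ∧ Even (i - n) then 𝟙 B else 0
  shape i j h := by
    rw [if_neg]; intro h'; exact h h'.1
  d_comp_d' i j k hij hjk := by
    by_cases h : Even (i - n)
    · have : ¬ Even (j - n) := by
        have : i + 1 = j := hij
        subst this
        grind
      simp [this]
    · simp [h]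

def contrMap (n : ℤ) {A B : ModuleCat.{u} R} (g : A ⟶ B) : contr n A ⟶ contr n B where
  f _ := g
  comm' i j _ := by
    dsimp [contr]
    split_ifs <;> simp

open scoped Classical in
noncomputable def toContr (n : ℤ) (L : CochainComplex (ModuleCat.{u} R) ℤ) (B : ModuleCat.{u} R)
    (φ : L.X n ⟶ B) : L ⟶ contr (n - 1) B where
  f k := if h : k = n then (L.XIsoOfEq h).hom ≫ φ else L.d k n ≫ φ
  comm' i j hij := by
    have hij' : i + 1 = j := hij
    dsimp [contr]
    by_cases hj : j = n
    · subst hj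
      have hi : i ≠ j := by omega
      have : Even (i - (j - 1)) := by
        have : i - (j-1) = 0 := by omega
        simp [this]
      simp [hi, hij', this]
    · rw [dif_neg hj]
      simp only [HomologicalComplex.d_comp_d_assoc, zero_comp]
      by_cases hi : i = n
      · subst hi
        have : ¬ Even (i - (i - 1)) := by
          have : i - (i-1) = 1 := by omega
          simp [this]
        simp [this]
      · rw [dif_neg hi, L.shape i n (by intro h; exact hj (by rw [← hij']; exact h))]
        simp

lemma contrMap_rlp (n : ℤ) {A B : ModuleCat.{u} R} (g : A ⟶ B) [Epi g] :
    (genCof R).rlp (contrMap n g) := by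
  have : Projective (ModuleCat.of R R) := ModuleCat.projective_of_free (Module.Basis.singleton PUnit.{u+1} R)
  apply rlp_of_lift
  intro m z hz y h
  by_cases hm : Even (m - n)
  · refine ⟨z, ?_, ?_⟩
    · simp [contr, hm]
      exact Category.comp_id (Y := A) z
    · simp [contr, hm] at h
      exact h.symm.trans (Category.comp_id (Y := B) y)
  · have h2 : z = 0 := by
      have := hz (m+1+1) (by simp)
      have h3 : Even (m + 1 - n) := by grind
      simp [contr, h3] at this
      exact (Category.comp_id (Y := A) z).symm.trans this
    refine ⟨Projective.factorThru (P := ModuleCat.of R R) (E := A) (X := B) y g, ?_, ?_⟩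
    · subst h2
      simp [contr, hm]
      rfl
    · exact Projective.factorThru_comp (P := ModuleCat.of R R) (E := A) (X := B) y g

open ZeroObject in
lemma exists_termwise_flat (Y : CochainComplex (ModuleCat.{u} R) ℤ) :
    ∃ (L : CochainComplex (ModuleCat.{u} R) ℤ) (p : L ⟶ Y), QuasiIso p ∧
      ∀ n, Module.Flat R (L.X n) := by
  let fac := MorphismProperty.factorizationData (genCof R).rlp.llp (genCof R).rlp (0 : 0 ⟶ Y)
  refine ⟨fac.Z, fac.p, ?_, ?_⟩
  · have key := fac.hp
    have elt : ∀ (n : ℤ) (z : fac.Z.X (n+1)) (hz : ∀ k, (ComplexShape.up ℤ).Rel (n+1) k → fac.Z.d (n+1) k z = 0)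
      (y : Y.X n) (h : Y.d n (n+1) y = fac.p.f (n+1) z), ∃ x : fac.Z.X n, fac.Z.d n (n+1) x = z ∧
        fac.p.f n x = y := by
      intro n z hz y h
      obtain ⟨x, hx1, hx2⟩ := rlp_lift fac.p key n
        (ModuleCat.ofHom (LinearMap.toSpanSingleton R _ z))
        (by intro k hk; ext; simpa using hz k hk)
        (ModuleCat.ofHom (LinearMap.toSpanSingleton R _ y))
        (by ext; simpa using h)
      refine ⟨x (1 : R), ?_, ?_⟩
      · simpa using ConcreteCategory.congr_hom hx1 (1 : R)
      · simpa using ConcreteCategory.congr_hom hx2 (1 : R)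
    have epiT : ∀ T : ModuleCat.{u} R, Epi (ModuleCat.ofHom (Finsupp.linearCombination R (id : T → T))) := by
      intro T
      rw [ModuleCat.epi_iff_surjective]
      exact Finsupp.linearCombination_id_surjective R T
    rw [quasiIso_iff]
    intro j
    rw [quasiIsoAt_iff_isIso_homologyMap]
    have hmono : Mono (HomologicalComplex.homologyMap fac.p j) := by
      obtain ⟨i, rfl⟩ : ∃ i, j = i + 1 := ⟨j - 1, by omega⟩
      rw [HomologicalComplex.mono_homologyMap_iff_up_to_refinements _ i (i+1) (i+1+1) (by simp) (by simp)]
      intro T x2 hx2 y1 hy1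
      have : ∀ t : T, ∃ x : fac.Z.X i, fac.Z.d i (i+1) x = x2 t := by
        intro t
        obtain ⟨x, hx, _⟩ := elt i (x2 t) (by
          intro k hk
          obtain rfl : i + 1 + 1 = k := hk
          simpa using ConcreteCategory.congr_hom hx2 t) (y1 t) (by
            simpa using (ConcreteCategory.congr_hom hy1 t).symm)
        exact ⟨x, hx⟩
      choose x hx using this
      refine ⟨ModuleCat.of R (T →₀ R), ModuleCat.ofHom (Finsupp.linearCombination R (id : T → T)), epiT T,
        ModuleCat.ofHom (Finsupp.linearCombination R x), ?_⟩
      ext t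
      simp [hx]
    have hepi : Epi (HomologicalComplex.homologyMap fac.p j) := by
      obtain ⟨i, rfl⟩ : ∃ i, j = i + 1 := ⟨j - 1, by omega⟩
      rw [HomologicalComplex.epi_homologyMap_iff_up_to_refinements _ i (i+1) (i+1+1) (by simp) (by simp)]
      intro T y2 hy2
      have : ∀ t : T, ∃ x : fac.Z.X (i+1), fac.Z.d (i+1) (i+1+1) x = 0 ∧ fac.p.f (i+1) x = y2 t := by
        intro t
        exact elt (i+1) 0 (by simp) (y2 t) (by
            simpa using (ConcreteCategory.congr_hom hy2 t))
      choose x hx hx' using this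
      refine ⟨ModuleCat.of R (T →₀ R), ModuleCat.ofHom (Finsupp.linearCombination R (id : T → T)), epiT T,
        ModuleCat.ofHom (Finsupp.linearCombination R x), ?_, 0, ?_⟩
      · ext t
        simp [hx]
      · ext t
        simp [hx']
    exact isIso_of_mono_of_epi _
  · intro n
    have hproj : Projective (fac.Z.X n) := by
      constructor
      intro E X f e he
      have sq : CommSq (0 : 0 ⟶ contr (n-1) E) fac.i (contrMap (n-1) e) (toContr n _ _ f) := by
        constructor
        exact (isZero_zero _).eq_of_src _ _
      obtain ⟨⟨l, hl1, hl2⟩⟩ := ((fac.hi _ (contrMap_rlp (n-1) e)).sq_hasLift sq).exists_lift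
      refine ⟨l.f n, ?_⟩
      have h1 : (l ≫ contrMap (n-1) e).f n = (toContr n _ _ f).f n := by rw [hl2]
      simp [contrMap, toContr] at h1
      exact h1.trans (Category.id_comp f)
    have : Module.Projective R (fac.Z.X n) := (IsProjective.iff_projective _).2 hproj
    infer_instance

end Resol

section Tri
open Limits
lemma tri_retract {C : Type*} [Category C] [HasZeroObject C] [HasShift C ℤ] [Preadditive C]
    [∀ n : ℤ, (shiftFunctor C n).Additive] [Pretriangulated C]
    {X XS XB XS2 XQ : C} (ι : X ⟶ XS) (p : XS ⟶ XB) (δ1 : XB ⟶ X⟦(1:ℤ)⟧)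
    (j : XB ⟶ XS2) (q : XS2 ⟶ XQ) (δ2 : XQ ⟶ XB⟦(1:ℤ)⟧)
    (h1 : Triangle.mk ι p δ1 ∈ distTriang C) (h2 : Triangle.mk j q δ2 ∈ distTriang C)
    (h : δ2 ≫ δ1⟦(1:ℤ)⟧' = 0) :
    ∃ (Y : C) (c : XS2 ⟶ Y) (ω : Y ⟶ XS⟦(1:ℤ)⟧) (_ : Triangle.mk (p ≫ j) c ω ∈ distTriang C)
      (σ : X⟦(1:ℤ)⟧ ⟶ Y) (ρ : Y ⟶ X⟦(1:ℤ)⟧), σ ≫ ρ = 𝟙 _ := by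
  obtain ⟨g, hg⟩ : ∃ g : XS2 ⟶ X⟦(1:ℤ)⟧, δ1 = j ≫ g := by
    have h2' := inv_rot_of_distTriang _ h2
    obtain ⟨g, hg⟩ := Triangle.yoneda_exact₂ _ h2' δ1 (by
      have : δ2⟦(-1:ℤ)⟧' ≫ (δ1⟦(1:ℤ)⟧')⟦(-1:ℤ)⟧' = 0 := by
        rw [← Functor.map_comp, h]; simp
      have e : (shiftShiftNeg XB (1:ℤ)).hom ≫ δ1 = (δ1⟦(1:ℤ)⟧')⟦(-1:ℤ)⟧' ≫ (shiftShiftNeg _ (1:ℤ)).hom := by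
        exact ((shiftFunctorCompIsoId C (1:ℤ) (-1) (by simp)).hom.naturality δ1).symm
      have e2 : δ2⟦(-1:ℤ)⟧' ≫ (shiftShiftNeg XB (1:ℤ)).hom ≫ δ1 = 0 := by
        rw [e, reassoc_of% this, zero_comp]
      have e3 : (-(δ2⟦(-1:ℤ)⟧' ≫ (shiftShiftNeg XB (1:ℤ)).hom)) ≫ δ1 = 0 := by
        rw [Preadditive.neg_comp, Category.assoc, e2, neg_zero]
      exact e3)
    exact ⟨g, hg⟩
  obtain ⟨Y, c, ω, hY⟩ := distinguished_cocone_triangle (p ≫ j)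
  obtain ⟨ρ, hρ⟩ : ∃ ρ : Y ⟶ X⟦(1:ℤ)⟧, g = c ≫ ρ := Triangle.yoneda_exact₂ _ hY g (by
    have : p ≫ δ1 = 0 := comp_distTriang_mor_zero₂₃ _ h1
    rw [hg] at this
    exact (Category.assoc _ _ _).trans this)
  obtain ⟨σ, hσ1, hσ2⟩ : ∃ σ : X⟦(1:ℤ)⟧ ⟶ Y, δ1 ≫ σ = j ≫ c ∧
      (-ι⟦(1:ℤ)⟧') ≫ (𝟙 XS)⟦(1:ℤ)⟧' = σ ≫ ω :=
    complete_distinguished_triangle_morphism (Triangle.mk p δ1 (-ι⟦(1:ℤ)⟧')) _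
    (rot_of_distTriang _ h1) hY (𝟙 XS) j (Category.id_comp _).symm
  have h3 : δ1 ≫ (σ ≫ ρ - 𝟙 _) = 0 := by
    rw [Preadditive.comp_sub, ← Category.assoc, hσ1, Category.assoc, ← hρ, hg]; simp
  obtain ⟨v, hv⟩ : ∃ v : XS⟦(1:ℤ)⟧ ⟶ X⟦(1:ℤ)⟧, σ ≫ ρ - 𝟙 _ = (-ι⟦(1:ℤ)⟧') ≫ v := Triangle.yoneda_exact₂ _ (rot_of_distTriang _ (rot_of_distTriang _ h1)) _ h3
  refine ⟨Y, c, ω, hY, σ, ρ - ω ≫ v, ?_⟩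
  rw [CategoryTheory.Functor.map_id, Category.comp_id] at hσ2
  rw [Preadditive.comp_sub, ← Category.assoc, ← hσ2, ← hv]
  simp
end Tri
section TC
open Limits TensorProduct
variable {R : Type u} [CommRing R]

/-- the functor `W ⊗ -` -/
def TW (R : Type u) [CommRing R] (W : Type u) [AddCommGroup W] [Module R W] : ModuleCat.{u} R ⥤ ModuleCat.{u} R where
  obj X := ModuleCat.of R (W ⊗[R] X)
  map g := ModuleCat.ofHom (LinearMap.lTensor W g.hom)
  map_id X := by ext : 1; simp
  map_comp f g := by ext : 1; simp [LinearMap.lTensor_comp]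

variable {W W' W'' : Type u} [AddCommGroup W] [Module R W] [AddCommGroup W'] [Module R W']
  [AddCommGroup W''] [Module R W'']

instance : (TW R W).Additive where
  map_add {X Y f g} := by
    ext : 1
    exact LinearMap.lTensor_add W f.hom g.hom

/-- functoriality in `W` -/
def TWmap (φ : W →ₗ[R] W') : TW R W ⟶ TW R W' where
  app X := ModuleCat.ofHom (LinearMap.rTensor X φ)
  naturality X Y f := by
    ext : 1
    exact (LinearMap.rTensor_comp_lTensor _ φ f.hom).trans (LinearMap.lTensor_comp_rTensor _ φ f.hom).symm

/-- `W ⊗ X` for a complex `X` -/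
noncomputable def TC (W : Type u) [AddCommGroup W] [Module R W] (X : CochainComplex (ModuleCat.{u} R) ℤ) :
    CochainComplex (ModuleCat.{u} R) ℤ := ((TW R W).mapHomologicalComplex _).obj X

/-- functoriality in `W` -/
noncomputable def TCmap (φ : W →ₗ[R] W') (X : CochainComplex (ModuleCat.{u} R) ℤ) :
    TC W X ⟶ TC W' X := (NatTrans.mapHomologicalComplex (TWmap φ) _).app X

lemma TCmap_f (φ : W →ₗ[R] W') (X : CochainComplex (ModuleCat.{u} R) ℤ) (n : ℤ) :
   (TCmap φ X).f n = ModuleCat.ofHom (LinearMap.rTensor (X.X n) φ) := rfl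

lemma TCmap_comp (φ : W →ₗ[R] W') (ψ : W' →ₗ[R] W'') (X : CochainComplex (ModuleCat.{u} R) ℤ) :
    TCmap (ψ ∘ₗ φ) X = TCmap φ X ≫ TCmap ψ X := by
  ext n : 1
  rw [HomologicalComplex.comp_f, TCmap_f, TCmap_f, TCmap_f, LinearMap.rTensor_comp]
  rfl

lemma TCmap_zero (X : CochainComplex (ModuleCat.{u} R) ℤ) :
    TCmap (0 : W →ₗ[R] W') X = 0 := by
  ext n : 1
  rw [TCmap_f, LinearMap.rTensor_zero]
  rfl

lemma TC_ses (φ : W →ₗ[R] W') (ψ : W' →ₗ[R] W'') (X : CochainComplex (ModuleCat.{u} R) ℤ)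
    (hX : ∀ n, Module.Flat R (X.X n)) (h1 : Function.Injective φ) (h2 : Function.Surjective ψ)
    (h : Function.Exact φ ψ) (hz : TCmap φ X ≫ TCmap ψ X = 0) :
    (ShortComplex.mk (TCmap φ X) (TCmap ψ X) hz).ShortExact := by
  apply HomologicalComplex.shortExact_of_degreewise_shortExact
  intro n
  have := hX n
  refine { exact := ?_, mono_f := ?_, epi_g := ?_ }
  · rw [ShortComplex.ShortExact.moduleCat_exact_iff_function_exact]
    exact rTensor_exact (X.X n) h h2
  · rw [ModuleCat.mono_iff_injective]
    exact Module.Flat.rTensor_preserves_injective_linearMap (M := X.X n) φ h1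
  · rw [ModuleCat.epi_iff_surjective]
    exact LinearMap.rTensor_surjective (X.X n) h2

/-- `R ⊗ X = X` -/
noncomputable def TCunit (X : CochainComplex (ModuleCat.{u} R) ℤ) : TC R X ≅ X :=
  HomologicalComplex.Hom.isoOfComponents (fun n => (TensorProduct.lid R (X.X n)).toModuleIso) (by
    intro i j _
    ext : 1
    apply TensorProduct.ext'
    intro x y
    change X.d i j (x • y) = x • X.d i j y
    simp)

variable {S B S2 Q F Z : Type u} [AddCommGroup S] [AddCommGroup B] [AddCommGroup S2] [AddCommGroup Q]
  [AddCommGroup F] [AddCommGroup Z] [Module R S] [Module R B] [Module R S2] [Module R Q] [Module R F] [Module R Z]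

lemma TC_main [HasDerivedCategory (ModuleCat.{u} R)] (i : R →ₗ[R] S) (p : S →ₗ[R] B) (j : B →ₗ[R] S2) (q : S2 →ₗ[R] Q)
   (k : Z →ₗ[R] F) (l : F →ₗ[R] Q) (m : F →ₗ[R] S2) (n : Z →ₗ[R] S)
   (hi : Function.Injective i) (hip : Function.Exact i p) (hp : Function.Surjective p)
   (hj : Function.Injective j) (hjq : Function.Exact j q) (hq : Function.Surjective q)
   (hk : Function.Injective k) (hkl : Function.Exact k l) (hl : Function.Surjective l)
   (hm : q ∘ₗ m = l) (hn : j ∘ₗ p ∘ₗ n = m ∘ₗ k)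
   (X : CochainComplex (ModuleCat.{u} R) ℤ) (hX : ∀ n, Module.Flat R (X.X n))
   (P : DerivedCategory (ModuleCat.{u} R) → Prop)
    (Piso : ∀ X Y : DerivedCategory (ModuleCat.{u} R), (X ≅ Y) → P X → P Y)
    (Pneg : ∀ X, P X → P (X⟦(-1 : ℤ)⟧))
    (Ptri : ∀ T : Triangle (DerivedCategory (ModuleCat.{u} R)),
      (T ∈ distTriang (DerivedCategory (ModuleCat.{u} R))) →
      P T.obj₁ → P T.obj₂ → P T.obj₃)
    (Pret : ∀ (X Y : DerivedCategory (ModuleCat.{u} R)) (i : X ⟶ Y) (r : Y ⟶ X),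
      i ≫ r = 𝟙 X → P Y → P X)
    (PS : P (DerivedCategory.Q.obj (TC S X))) (PS2 : P (DerivedCategory.Q.obj (TC S2 X))) :
    P (DerivedCategory.Q.obj X) := by
  have z1 : TCmap i X ≫ TCmap p X = 0 := by
    rw [← TCmap_comp, hip.linearMap_comp_eq_zero, TCmap_zero]
  have z2 : TCmap j X ≫ TCmap q X = 0 := by
    rw [← TCmap_comp, hjq.linearMap_comp_eq_zero, TCmap_zero]
  have z3 : TCmap k X ≫ TCmap l X = 0 := by
    rw [← TCmap_comp, hkl.linearMap_comp_eq_zero, TCmap_zero]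
  have s1 := TC_ses i p X hX hi hp hip z1
  have s2 := TC_ses j q X hX hj hq hjq z2
  have s3 := TC_ses k l X hX hk hl hkl z3
  have t1 := DerivedCategory.triangleOfSES_distinguished s1
  have t2 := DerivedCategory.triangleOfSES_distinguished s2
  let α : ShortComplex.mk (TCmap k X) (TCmap l X) z3 ⟶ ShortComplex.mk (TCmap j X) (TCmap q X) z2 :=
    { τ₁ := TCmap (p ∘ₗ n) X
      τ₂ := TCmap m X
      τ₃ := 𝟙 _
      comm₁₂ := by
        dsimp
        rw [← TCmap_comp, ← TCmap_comp, hn]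
      comm₂₃ := by
        dsimp
        rw [← TCmap_comp, hm, Category.comp_id] }
  have nat := DerivedCategory.triangleOfSESδ_naturality s3 s2 α
  have e1 : DerivedCategory.Q.map (TCmap p X) ≫ DerivedCategory.triangleOfSESδ s1 = 0 :=
    comp_distTriang_mor_zero₂₃ _ t1
  have key : DerivedCategory.triangleOfSESδ s2 ≫ (DerivedCategory.triangleOfSESδ s1)⟦(1:ℤ)⟧' = 0 := by
    have e2 : DerivedCategory.triangleOfSESδ s3 ≫
        (DerivedCategory.Q.map (TCmap (p ∘ₗ n) X))⟦(1:ℤ)⟧' = DerivedCategory.triangleOfSESδ s2 :=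
      nat.trans (by
        change DerivedCategory.Q.map (𝟙 _) ≫ _ = _
        rw [CategoryTheory.Functor.map_id, Category.id_comp])
    rw [← e2, TCmap_comp, DerivedCategory.Q.map_comp, Category.assoc, ← Functor.map_comp, Category.assoc, e1,
      comp_zero, Functor.map_zero, comp_zero]
  obtain ⟨Y, c, ω, hY, σ, ρ, hσ⟩ := tri_retract _ _ _ _ _ _ t1 t2 key
  have PY : P Y := Ptri _ hY PS PS2
  have PX1 := Pret _ _ σ ρ hσ PY
  refine Piso _ _ ?_ (Pneg _ PX1)
  exact (shiftShiftNeg _ (1:ℤ)) ≪≫ DerivedCategory.Q.mapIso (TCunit X)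


/-- `W ⊗ -` as a functor to `S`-modules -/
noncomputable def FW (R S : Type u) [CommRing R] [CommRing S] [Algebra R S] (W : Type u) [AddCommGroup W] [Module R W] [Module S W]
    [IsScalarTower R S W] : ModuleCat.{u} R ⥤ ModuleCat.{u} S where
  obj X := ModuleCat.of S (W ⊗[R] X)
  map g := ModuleCat.ofHom (TensorProduct.AlgebraTensorModule.lTensor S W g.hom)
  map_id X := by ext : 1; simp
  map_comp f g := by ext : 1; simp [TensorProduct.AlgebraTensorModule.lTensor_comp]

section
variable {S : Type u} [CommRing S] [Algebra R S] (W : Type u) [AddCommGroup W] [Module R W] [Module S W]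
    [IsScalarTower R S W]

instance : (FW R S W).Additive where
  map_add {X Y f g} := by
    ext : 1
    apply LinearMap.ext
    intro x
    exact congrArg (fun h => h x) (LinearMap.lTensor_add W f.hom g.hom)

/-- comparison -/
noncomputable def FWTC (X : CochainComplex (ModuleCat.{u} R) ℤ) :
    ((ModuleCat.restrictScalars.{u} (algebraMap R S)).mapHomologicalComplex (ComplexShape.up ℤ)).obj
      (((FW R S W).mapHomologicalComplex _).obj X) ≅ TC W X :=
  HomologicalComplex.Hom.isoOfComponents (fun n =>
    LinearEquiv.toModuleIso (R := R) (m₁ := ModuleCat.isModule _) (X₁ := (ModuleCat.restrictScalars.{u} (algebraMap R S)).obj (ModuleCat.of S (W ⊗[R] X.X n)))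
      (X₂ := W ⊗[R] X.X n)
      { toFun := fun x => x
        invFun := fun x => x
        map_add' := fun _ _ => rfl
        map_smul' := fun r x => algebraMap_smul S r (M := W ⊗[R] X.X n) x
        left_inv := fun _ => rfl
        right_inv := fun _ => rfl }) (by
    intro i j _
    ext x
    rfl)
end
end TC
section Desc
open TensorProduct Limits

lemma IsUniversalDescent.of_comp {R S T : Type u} [CommRing R] [CommRing S] [CommRing T] (f : R →+* S) (g : S →+* T)
    (h : IsUniversalDescent (g.comp f)) : IsUniversalDescent f := by
  letI := HasDerivedCategory.standard (ModuleCat.{u} R)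
  intro P Piso P1 Pneg Ptri Pret PS
  refine h P Piso P1 Pneg Ptri Pret ?_
  intro K
  refine Piso _ _ (DerivedCategory.Q.mapIso ?_)
    (PS (((ModuleCat.restrictScalars.{u} g).mapHomologicalComplex (ComplexShape.up ℤ)).obj K))
  exact HomologicalComplex.Hom.isoOfComponents (fun n =>
    ((ModuleCat.restrictScalarsComp.{u} f g).app (K.X n)).symm) (by
      intro i j _
      ext x
      rfl)

lemma isUniversalDescent_of_data {R S : Type u} [CommRing R] [CommRing S] [Algebra R S]
    {B Q F Z : Type u} [AddCommGroup B] [AddCommGroup Q]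
    [AddCommGroup F] [AddCommGroup Z] [Module R B] [Module R Q] [Module R F] [Module R Z]
   (p : S →ₗ[R] B) (j : B →ₗ[R] S ⊗[R] B) (q : S ⊗[R] B →ₗ[R] Q)
   (k : Z →ₗ[R] F) (l : F →ₗ[R] Q) (m : F →ₗ[R] S ⊗[R] B) (n : Z →ₗ[R] S)
   (hi : Function.Injective (algebraMap R S)) (hip : Function.Exact (algebraMap R S) p) (hp : Function.Surjective p)
   (hj : Function.Injective j) (hjq : Function.Exact j q) (hq : Function.Surjective q)
   (hk : Function.Injective k) (hkl : Function.Exact k l) (hl : Function.Surjective l)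
   (hm : q ∘ₗ m = l) (hn : j ∘ₗ p ∘ₗ n = m ∘ₗ k) : IsUniversalDescent (algebraMap R S) := by
  letI := HasDerivedCategory.standard (ModuleCat.{u} R)
  intro P Piso P1 Pneg Ptri Pret PS X
  let Y := DerivedCategory.Q.objPreimage X
  refine Piso _ _ (DerivedCategory.Q.objObjPreimageIso X) ?_
  obtain ⟨L, r, hr, hL⟩ := exists_termwise_flat Y
  refine Piso _ _ (asIso (DerivedCategory.Q.map r)) ?_
  refine TC_main (Algebra.linearMap R S) p j q k l m n hi hip hp hj hjq hq hk hkl hl hm hn L hL P Piso Pneg Ptri Pret ?_ ?_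
  · exact Piso _ _ (DerivedCategory.Q.mapIso (FWTC (S := S) S L)) (PS _)
  · exact Piso _ _ (DerivedCategory.Q.mapIso (FWTC (S := S) (S ⊗[R] B) L)) (PS _)
end Desc
section A5
variable {A : Type u} [CommRing A] {ι : Type*}

lemma flat_approx (K W : Submodule A (ι →₀ A)) [Module.Flat A ((ι →₀ A) ⧸ K)] (hW : W.FG) (hWK : W ≤ K) :
    ∃ (φ : (ι →₀ A) →ₗ[A] (ι →₀ A)) (W' : Submodule A (ι →₀ A)), W'.FG ∧ W' ≤ K ∧
      LinearMap.range φ ≤ W' ∧ ∀ x ∈ W, φ x = x := by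
  classical
  obtain ⟨t, ht⟩ := hW
  let s : Finset ι := t.biUnion (fun x => x.support)
  have hs : ∀ x ∈ W, x.support ⊆ s := by
    have : W ≤ Finsupp.supported A A (s : Set ι) := by
      rw [← ht, Submodule.span_le]
      intro x hx
      rw [SetLike.mem_coe, Finsupp.mem_supported, Finset.coe_subset]
      exact Finset.subset_biUnion_of_mem (fun x : ι →₀ A => x.support) hx
    intro x hx
    have := this hx
    rwa [Finsupp.mem_supported, Finset.coe_subset] at this
  let e : (s →₀ A) →ₗ[A] (ι →₀ A) := Finsupp.lmapDomain A A (Subtype.val)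
  let pr : (ι →₀ A) →ₗ[A] (s →₀ A) := Finsupp.lcomapDomain Subtype.val Subtype.val_injective
  have hep : ∀ x ∈ W, e (pr x) = x := by
    intro x hx
    exact Finsupp.mapDomain_comapDomain _ Subtype.val_injective x (by
      intro i hi
      exact ⟨⟨i, hs x hx hi⟩, rfl⟩)
  have : Module.Finite A W := Module.Finite.of_fg ⟨t, ht⟩
  obtain ⟨k, a, y, hy, ha⟩ := Module.Flat.exists_factorization_of_comp_eq_zero_of_free (R := A) (K := W)
    (f := pr ∘ₗ W.subtype) (x := K.mkQ ∘ₗ e) (by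
      ext x : 1
      simp only [LinearMap.comp_apply, Submodule.subtype_apply, LinearMap.zero_apply]
      rw [hep x x.2]
      simpa using hWK x.2)
  obtain ⟨y', hy'⟩ := Module.projective_lifting_property K.mkQ y K.mkQ_surjective
  refine ⟨(e - y' ∘ₗ a) ∘ₗ pr, LinearMap.range (e - y' ∘ₗ a), ?_, ?_, ?_, ?_⟩
  · rw [LinearMap.range_eq_map]; exact Module.Finite.fg_top.map _
  · rintro _ ⟨x, rfl⟩
    rw [← Submodule.ker_mkQ K, LinearMap.mem_ker]
    have h1 := LinearMap.congr_fun hy x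
    have h2 := LinearMap.congr_fun hy' (a x)
    simp only [LinearMap.comp_apply] at h1 h2
    simp only [LinearMap.sub_apply, map_sub, LinearMap.comp_apply]
    rw [h1, h2, sub_self]
  · exact LinearMap.range_comp_le_range _ _
  · intro x hx
    have h1 := LinearMap.congr_fun ha ⟨x, hx⟩
    simp only [LinearMap.comp_apply, Submodule.subtype_apply, LinearMap.zero_apply] at h1
    simp [hep x hx, h1]

lemma projective_of_flat_quot (K : Submodule A (ι →₀ A)) [Module.Flat A ((ι →₀ A) ⧸ K)]
    (s : Set (ι →₀ A)) (hs : s.Countable) (hsK : Submodule.span A s = K) : Module.Projective A K := by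
  classical
  obtain ⟨k, hk⟩ : ∃ k : ℕ → (ι →₀ A), Submodule.span A (Set.range k) = K := by
    obtain ⟨k, hk⟩ := (hs.insert 0).exists_eq_range ⟨0, by simp⟩
    exact ⟨k, by rw [← hk, ← hsK]; simp⟩
  have hkK : ∀ n, k n ∈ K := fun n => by
    rw [← hk]; exact Submodule.subset_span ⟨n, rfl⟩
  let T := { W : Submodule A (ι →₀ A) // W.FG ∧ W ≤ K }
  have step : ∀ (n : ℕ) (W : T), ∃ (φ : (ι →₀ A) →ₗ[A] (ι →₀ A)) (W' : T),
      LinearMap.range φ ≤ W'.1 ∧ ∀ x ∈ W.1 ⊔ Submodule.span A {k n}, φ x = x := by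
    intro n W
    obtain ⟨φ, W', h1, h2, h3, h4⟩ := flat_approx K (W.1 ⊔ Submodule.span A {k n})
      (W.2.1.sup (Submodule.fg_span_singleton _)) (sup_le W.2.2 (by simpa using hkK n))
    exact ⟨φ, ⟨W', h1, h2⟩, h3, h4⟩
  choose Φ N h1 h2 using step
  let W : ℕ → T := fun n => Nat.rec ⟨⊥, Submodule.fg_bot, bot_le⟩ (fun n W => N n W) n
  have hW : ∀ n, W (n+1) = N n (W n) := fun n => rfl
  let φ : ℕ → ((ι →₀ A) →ₗ[A] (ι →₀ A)) := fun n => Nat.casesOn n 0 (fun m => Φ m (W m))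
  have hφ0 : φ 0 = 0 := rfl
  have hφr : ∀ n x, φ n x ∈ (W n).1 := by
    intro n x
    cases n with
    | zero => simp [hφ0]
    | succ n => exact h1 n (W n) ⟨x, rfl⟩
  have hφW : ∀ n, ∀ x ∈ (W n).1, φ (n+1) x = x := fun n x hx =>
    h2 n (W n) x (Submodule.mem_sup_left hx)
  have hφk : ∀ n, φ (n+1) (k n) = k n := fun n =>
    h2 n (W n) _ (Submodule.mem_sup_right (Submodule.mem_span_singleton_self _))
  have hmono : Monotone (fun n => (W n).1) := by
    apply monotone_nat_of_le_succ
    intro n x hx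
    rw [← hφW n x hx]
    exact hφr (n+1) x
  have hKW : ∀ x ∈ K, ∃ n, x ∈ (W n).1 := by
    intro x hx
    have : K ≤ ⨆ n, (W n).1 := by
      refine hk.symm.le.trans ?_
      rw [Submodule.span_le]
      rintro _ ⟨n, rfl⟩
      refine Submodule.mem_iSup_of_mem (n+1) ?_
      rw [← hφk n]
      exact hφr (n+1) _
    exact (Submodule.mem_iSup_of_directed _ hmono.directed_le).1 (this hx)
  have hfix : ∀ n, ∀ x ∈ (W n).1, ∀ m, n < m → φ m x = x := by
    intro n x hx m hm
    obtain ⟨m, rfl⟩ : ∃ m', m = m' + 1 := ⟨m - 1, by omega⟩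
    exact hφW m x (hmono (by omega) hx)
  have hfin : ∀ x : K, (Function.support (fun n => (x : ι →₀ A) - φ n x)).Finite := by
    intro x
    obtain ⟨n, hn⟩ := hKW x x.2
    refine (Set.finite_Iic n).subset ?_
    intro m hm
    by_contra hlt
    simp only [Set.mem_Iic, not_le] at hlt
    exact hm (by simp [hfix n x hn m hlt])
  let i : K →ₗ[A] (ℕ →₀ (ι →₀ A)) :=
    { toFun := fun x => Finsupp.ofSupportFinite _ (hfin x)
      map_add' := fun x y => by
        ext n : 1
        simp only [Finsupp.ofSupportFinite_coe, Finsupp.add_apply, Submodule.coe_add, map_add]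
        abel
      map_smul' := fun r x => by
        ext n : 1
        simp only [Finsupp.ofSupportFinite_coe, Finsupp.smul_apply, Submodule.coe_smul, map_smul,
          RingHom.id_apply, smul_sub] }
  let r : (ℕ →₀ (ι →₀ A)) →ₗ[A] K :=
    Finsupp.lsum A (fun n => LinearMap.codRestrict K (φ (n+1)) (fun x => (W (n+1)).2.2 (hφr (n+1) x)))
  refine Module.Projective.of_split i r ?_
  ext x : 1
  obtain ⟨n, hn⟩ := hKW x x.2
  apply Subtype.ext
  have hsub : (i x).support ⊆ Finset.range (n+1) := by
    intro m hm
    rw [Finsupp.mem_support_iff] at hm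
    by_contra hlt
    simp only [Finset.mem_range, not_lt] at hlt
    exact hm (show (x : ι →₀ A) - φ m x = 0 by simp [hfix n x hn m (by omega)])
  have e1 : r (i x) = ∑ m ∈ Finset.range (n+1), LinearMap.codRestrict K (φ (m+1)) (fun x => (W (m+1)).2.2 (hφr (m+1) x)) (i x m) := by
    simp only [r, Finsupp.lsum_apply]
    exact Finsupp.sum_of_support_subset _ hsub _ (by simp)
  rw [LinearMap.comp_apply, e1, Submodule.coe_sum]
  have e2 : ∀ m ∈ Finset.range (n+1), ((LinearMap.codRestrict K (φ (m+1)) (fun x => (W (m+1)).2.2 (hφr (m+1) x)) (i x m) : K) : ι →₀ A)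
      = φ (m+1) x - φ m x := by
    intro m _
    change φ (m+1) ((x : ι →₀ A) - φ m x) = _
    rw [map_sub, hφW m _ (hφr m _)]
  rw [Finset.sum_congr rfl e2, Finset.sum_range_sub (fun m => φ m (x : ι →₀ A)), hφ0]
  simp [hfix n x hn (n+1) (by omega)]
end A5
section CP
open TensorProduct Pointwise
variable {A : Type u} [CommRing A]

/-- countably generated submodule -/
def CGs {M : Type*} [AddCommGroup M] [Module A M] (N : Submodule A M) : Prop :=
  ∃ s : Set M, s.Countable ∧ Submodule.span A s = N

/-- countably presented module -/
def CPm (A : Type u) [CommRing A] (M : Type*) [AddCommGroup M] [Module A M] : Prop :=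
  ∃ (ι : Type) (_ : Countable ι) (f : (ι →₀ A) →ₗ[A] M), Function.Surjective f ∧ CGs (LinearMap.ker f)

variable {M M' : Type*} [AddCommGroup M] [Module A M] [AddCommGroup M'] [Module A M']

lemma CGs.sup {N N' : Submodule A M} (h : CGs N) (h' : CGs N') : CGs (N ⊔ N') := by
  obtain ⟨s, hs, rfl⟩ := h
  obtain ⟨t, ht, rfl⟩ := h'
  exact ⟨s ∪ t, hs.union ht, Submodule.span_union s t⟩

lemma CGs.map {N : Submodule A M} (h : CGs N) (f : M →ₗ[A] M') : CGs (N.map f) := by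
  obtain ⟨s, hs, rfl⟩ := h
  exact ⟨f '' s, hs.image f, (Submodule.map_span f s).symm⟩

lemma CGs.comap {N : Submodule A M'} (h : CGs N) (f : M →ₗ[A] M') (hf : Function.Surjective f)
    (hk : CGs (LinearMap.ker f)) : CGs (N.comap f) := by
  obtain ⟨s, hs, rfl⟩ := h
  obtain ⟨g, hg⟩ := hf.hasRightInverse
  have : (Submodule.span A s).comap f = Submodule.span A (g '' s) ⊔ LinearMap.ker f := by
    rw [← Submodule.comap_map_eq, Submodule.map_span, Set.image_image]
    simp [hg _]
  rw [this]
  exact CGs.sup ⟨_, hs.image g, rfl⟩ hk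

lemma CGs.top_finsupp (ι : Type) [Countable ι] : CGs (⊤ : Submodule A (ι →₀ A)) := by
  refine ⟨Set.range (fun i => Finsupp.single i 1), Set.countable_range _, ?_⟩
  have := (Finsupp.basisSingleOne (R := A) (ι := ι)).span_eq
  simpa using this

lemma CPm.cg (h : CPm A M) : CGs (⊤ : Submodule A M) := by
  obtain ⟨ι, _, f, hf, _⟩ := h
  have := (CGs.top_finsupp (A := A) ι).map f
  rwa [Submodule.map_top, LinearMap.range_eq_top.2 hf] at this

lemma CPm.of_surj (h : CPm A M) (f : M →ₗ[A] M') (hf : Function.Surjective f)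
    (hk : CGs (LinearMap.ker f)) : CPm A M' := by
  obtain ⟨ι, _, g, hg, hgk⟩ := h
  refine ⟨ι, inferInstance, f ∘ₗ g, hf.comp hg, ?_⟩
  rw [LinearMap.ker_comp]
  exact hk.comap g hg hgk

lemma CGs.bot : CGs (⊥ : Submodule A M) := ⟨∅, Set.countable_empty, by simp⟩

lemma CPm.of_equiv (h : CPm A M) (e : M ≃ₗ[A] M') : CPm A M' :=
  h.of_surj e.toLinearMap e.surjective (by rw [LinearEquiv.ker]; exact CGs.bot)

lemma CPm.finsupp (ι : Type) [Countable ι] : CPm A (ι →₀ A) :=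
  ⟨ι, inferInstance, LinearMap.id, Function.surjective_id, by rw [LinearMap.ker_id]; exact CGs.bot⟩

lemma CGs.map₂ {N : Submodule A M} {N' : Submodule A M'} (h : CGs N) (h' : CGs N') :
    CGs (Submodule.map₂ (TensorProduct.mk A M M') N N') := by
  obtain ⟨s, hs, rfl⟩ := h
  obtain ⟨t, ht, rfl⟩ := h'
  rw [Submodule.map₂_span_span]
  exact ⟨_, hs.image2 ht _, rfl⟩

lemma CPm.tensor (h : CPm A M) (h' : CPm A M') : CPm A (M ⊗[A] M') := by
  obtain ⟨ι, _, f, hf, hfk⟩ := h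
  obtain ⟨κ, _, g, hg, hgk⟩ := h'
  have h1 : CPm A ((ι →₀ A) ⊗[A] (κ →₀ A)) :=
    (CPm.finsupp (A := A) (ι × κ)).of_equiv (finsuppTensorFinsupp' A ι κ).symm
  refine h1.of_surj (TensorProduct.map f g) (TensorProduct.map_surjective hf hg) ?_
  rw [TensorProduct.map_ker (M := LinearMap.ker f) (M' := LinearMap.ker g) (f := (LinearMap.ker f).subtype) (f' := (LinearMap.ker g).subtype)
    (LinearMap.exact_subtype_ker_map f) hf (LinearMap.exact_subtype_ker_map g) hg]
  refine CGs.sup ?_ ?_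
  · have : LinearMap.range (LinearMap.lTensor (ι →₀ A) (LinearMap.ker g).subtype) =
      Submodule.map₂ (TensorProduct.mk A (ι →₀ A) (κ →₀ A)) ⊤ (LinearMap.ker g) := by
      rw [LinearMap.lTensor, TensorProduct.range_map]
      simp
    rw [this]
    exact (CGs.top_finsupp ι).map₂ hgk
  · have : LinearMap.range (LinearMap.rTensor (κ →₀ A) (LinearMap.ker f).subtype) =
      Submodule.map₂ (TensorProduct.mk A (ι →₀ A) (κ →₀ A)) (LinearMap.ker f) ⊤ := by
      rw [LinearMap.rTensor, TensorProduct.range_map]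
      simp
    rw [this]
    exact hfk.map₂ (CGs.top_finsupp κ)

lemma CPm.of_fp {S : Type*} [CommRing S] [Algebra A S] (h : Algebra.FinitePresentation A S) : CPm A S := by
  obtain ⟨n, f, hf, hk⟩ := h
  have h1 : CPm A (MvPolynomial (Fin n) A) :=
    (CPm.finsupp (A := A) (Fin n →₀ ℕ)).of_equiv (MvPolynomial.basisMonomials (Fin n) A).repr.symm
  refine h1.of_surj f.toLinearMap hf ?_
  obtain ⟨t, ht⟩ := hk
  obtain ⟨s, hs, hs'⟩ := h1.cg
  refine ⟨s * (t : Set _), Set.Countable.image2 hs t.countable_toSet (· * ·), ?_⟩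
  rw [← Submodule.span_mul_span, hs']
  apply le_antisymm
  · rw [Submodule.mul_le]
    intro x _ y hy
    have : Submodule.span A (t : Set (MvPolynomial (Fin n) A)) ≤ LinearMap.ker f.toLinearMap := by
      rw [Submodule.span_le]
      intro z hz
      have : z ∈ RingHom.ker f.toRingHom := ht ▸ Submodule.subset_span hz
      exact this
    have h2 : f y = 0 := this hy
    change f (x * y) = 0
    rw [map_mul, h2, mul_zero]
  · intro x hx
    have hx' : x ∈ RingHom.ker f.toRingHom := hx
    rw [← ht] at hx'
    refine Submodule.span_induction ?_ ?_ ?_ ?_ hx'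
    · intro y hy
      rw [← one_mul y]
      exact Submodule.mul_mem_mul trivial (Submodule.subset_span hy)
    · exact zero_mem _
    · intro y z _ _ hy hz
      exact add_mem hy hz
    · intro r y _ hy
      rw [smul_eq_mul]
      have : r * y ∈ (⊤ : Submodule A (MvPolynomial (Fin n) A)) * (⊤ * Submodule.span A (t : Set _)) :=
        Submodule.mul_mem_mul trivial hy
      rw [← mul_assoc] at this
      have hle : ((⊤ : Submodule A (MvPolynomial (Fin n) A)) * ⊤) * Submodule.span A (t : Set _) ≤
          ⊤ * Submodule.span A (t : Set _) := mul_le_mul' le_top le_rfl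
      exact hle this

lemma CPm.projective_ker {M P K : Type u} [AddCommGroup M] [Module A M] [AddCommGroup P] [Module A P]
    [AddCommGroup K] [Module A K]
    (h : CPm A M) [Module.Flat A M] [Module.Projective A P] (k : K →ₗ[A] P) (f : P →ₗ[A] M)
    (hf : Function.Surjective f) (hk : Function.Injective k) (hkf : Function.Exact k f) :
    Module.Projective A K := by
  obtain ⟨ι, _, g, hg, s, hs, hsg⟩ := h
  have : Module.Flat A ((ι →₀ A) ⧸ LinearMap.ker g) :=
    Module.Flat.of_linearEquiv (g.quotKerEquivOfSurjective hg)
  have h1 : Module.Projective A (LinearMap.ker g) := projective_of_flat_quot _ s hs hsg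
  have se : (ShortComplex.mk (ModuleCat.ofHom (X := LinearMap.ker g) (LinearMap.ker g).subtype) (ModuleCat.ofHom g) (by
      ext x; exact x.2)).ShortExact := by
    refine { exact := ?_, mono_f := ?_, epi_g := ?_ }
    · rw [ShortComplex.ShortExact.moduleCat_exact_iff_function_exact]
      exact LinearMap.exact_subtype_ker_map g
    · rw [ModuleCat.mono_iff_injective]
      exact Subtype.val_injective
    · rw [ModuleCat.epi_iff_surjective]
      exact hg
  have se' : (ShortComplex.mk (ModuleCat.ofHom k) (ModuleCat.ofHom f) (by
      ext x; exact hkf.apply_apply_eq_zero x)).ShortExact := by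
    refine { exact := ?_, mono_f := ?_, epi_g := ?_ }
    · rw [ShortComplex.ShortExact.moduleCat_exact_iff_function_exact]
      exact hkf
    · rw [ModuleCat.mono_iff_injective]
      exact hk
    · rw [ModuleCat.epi_iff_surjective]
      exact hf
  have p2 : Projective (ModuleCat.of A (ι →₀ A)) := (IsProjective.iff_projective _).1 inferInstance
  have p1 : Projective (ModuleCat.of A (LinearMap.ker g)) := (IsProjective.iff_projective _).1 h1
  have p2' : Projective (ModuleCat.of A P) := (IsProjective.iff_projective _).1 inferInstance
  have h3 := (se.hasProjectiveDimensionLT_X₃_iff 0 p2).2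
    (projective_iff_hasProjectiveDimensionLT_one.1 p1)
  have h4 := (se'.hasProjectiveDimensionLT_X₃_iff 0 p2').1 h3
  exact (IsProjective.iff_projective _).2 (projective_iff_hasProjectiveDimensionLT_one.2 h4)
end CP
section TF
open TensorProduct
variable {R R0 : Type u} [CommRing R] [CommRing R0] [Algebra R R0] (a : R)

/-- `R → R0` is the quotient by `a` -/
structure IsModA (R0 : Type u) [CommRing R0] [Algebra R R0] : Prop where
  surj : Function.Surjective (algebraMap R R0)
  ker : ∀ r : R, algebraMap R R0 r = 0 ↔ ∃ r', r = a * r'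

/-- torsion-free -/
def TFm (M : Type*) [AddCommGroup M] [Module R M] : Prop := ∀ x : M, a • x = 0 → x = 0

variable {a} {M N Z F Q : Type u} [AddCommGroup M] [Module R M] [AddCommGroup N] [Module R N]
  [AddCommGroup Z] [Module R Z] [AddCommGroup F] [Module R F] [AddCommGroup Q] [Module R Q]

lemma IsModA.smul_eq_zero (h : IsModA a R0) : algebraMap R R0 a = 0 := (h.ker a).2 ⟨1, by simp⟩

lemma IsModA.exists_tmul (h : IsModA a R0) (x : R0 ⊗[R] M) : ∃ m : M, x = (1 : R0) ⊗ₜ m := by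
  obtain ⟨y, rfl⟩ := LinearMap.rTensor_surjective M (g := Algebra.linearMap R R0) h.surj x
  obtain ⟨m, rfl⟩ := (TensorProduct.lid R M).symm.surjective y
  exact ⟨m, by simp⟩

lemma IsModA.tmul_eq_zero (h : IsModA a R0) (x : M) (hx : (1 : R0) ⊗ₜ[R] x = 0) : ∃ y : M, x = a • y := by
  have ex : Function.Exact (LinearMap.mulLeft R a) (Algebra.linearMap R R0) := by
    intro r
    simp only [Algebra.linearMap_apply, h.ker, Set.mem_range, LinearMap.mulLeft_apply]
    exact ⟨fun ⟨s, hs⟩ => ⟨s, hs.symm⟩, fun ⟨s, hs⟩ => ⟨s, hs.symm⟩⟩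
  have := (rTensor_exact M ex h.surj ((1 : R) ⊗ₜ x)).1 (by simpa using hx)
  obtain ⟨w, hw⟩ := this
  obtain ⟨m, rfl⟩ := (TensorProduct.lid R M).symm.surjective w
  have := congrArg (TensorProduct.lid R M) hw
  exact ⟨m, by simpa using this.symm⟩

lemma IsModA.smul_tmul (h : IsModA a R0) (y : M) : (1 : R0) ⊗ₜ[R] (a • y) = 0 := by
  rw [← TensorProduct.smul_tmul, Algebra.smul_def, h.smul_eq_zero]; simp

lemma IsModA.baseChange_injective (h : IsModA a R0) (k : Z →ₗ[R] F) (l : F →ₗ[R] Q)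
    (hk : Function.Injective k) (hkl : Function.Exact k l) (hQ : TFm a Q) :
    Function.Injective (k.baseChange R0) := by
  rw [injective_iff_map_eq_zero]
  intro x hx
  obtain ⟨z, rfl⟩ := h.exists_tmul x
  rw [LinearMap.baseChange_tmul] at hx
  obtain ⟨y, hy⟩ := h.tmul_eq_zero _ hx
  have : l y = 0 := hQ _ (by rw [← map_smul, ← hy, hkl.apply_apply_eq_zero])
  obtain ⟨z', rfl⟩ := (hkl y).1 this
  rw [← map_smul] at hy
  rw [hk hy, h.smul_tmul]

lemma TFm.finsupp (ι : Type*) (h : TFm a M) : TFm a (ι →₀ M) := by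
  intro x hx
  ext i
  exact h _ (by simpa using DFunLike.congr_fun hx i)

lemma TFm.equiv (h : TFm a M) (e : N ≃ₗ[R] M) : TFm a N := by
  intro x hx
  apply e.injective
  rw [map_zero]
  exact h _ (by rw [← map_smul, hx, map_zero])

lemma baseChange_lTensor_injective (k : Z →ₗ[R] F) [Module.Flat R0 (R0 ⊗[R] N)]
    (inj0 : Function.Injective (k.baseChange R0)) :
    Function.Injective ((LinearMap.lTensor N k).baseChange R0) := by
  have h1 := Module.Flat.lTensor_preserves_injective_linearMap (M := R0 ⊗[R] N) (k.baseChange R0) inj0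
  have e : ∀ x, (TensorProduct.AlgebraTensorModule.distribBaseChange R R0 N F)
      ((LinearMap.lTensor N k).baseChange R0 x) = LinearMap.lTensor (R0 ⊗[R] N) (k.baseChange R0)
      (TensorProduct.AlgebraTensorModule.distribBaseChange R R0 N Z x) := by
    intro x
    induction x with
    | zero => simp only [map_zero]
    | add x y hx hy => simp only [map_add, hx, hy]
    | tmul r x =>
      induction x with
      | zero => simp only [tmul_zero, map_zero]
      | add x y hx hy => simp only [tmul_add, map_add, hx, hy]
      | tmul x y =>
        rw [LinearMap.baseChange_tmul, LinearMap.lTensor_tmul,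
          TensorProduct.AlgebraTensorModule.distribBaseChange_tmul,
          TensorProduct.AlgebraTensorModule.distribBaseChange_tmul,
          LinearMap.lTensor_tmul, LinearMap.baseChange_tmul]
  intro x y hxy
  apply (TensorProduct.AlgebraTensorModule.distribBaseChange R R0 N Z).injective
  apply h1
  rw [← e, ← e, hxy]

lemma IsModA.tf_tensor_aux (h : IsModA a R0) (k : Z →ₗ[R] F) (l : F →ₗ[R] Q)
    (hl : Function.Surjective l) (hkl : Function.Exact k l)
    (inj1 : Function.Injective ((LinearMap.lTensor N k).baseChange R0)) (tfF : TFm a (N ⊗[R] F)) :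
    TFm a (N ⊗[R] Q) := by
  intro x hx
  obtain ⟨y, rfl⟩ := LinearMap.lTensor_surjective N hl x
  have ex := lTensor_exact N hkl hl
  obtain ⟨z, hz⟩ := (ex (a • y)).1 (by rw [map_smul, hx])
  have hz0 : (1 : R0) ⊗ₜ[R] z = 0 := by
    apply inj1
    rw [LinearMap.baseChange_tmul, hz, h.smul_tmul, map_zero]
  obtain ⟨z', rfl⟩ := h.tmul_eq_zero _ hz0
  have : y = LinearMap.lTensor N k z' := by
    rw [← sub_eq_zero]
    apply tfF
    rw [smul_sub, ← hz, map_smul, sub_self]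
  rw [this]
  exact ex.apply_apply_eq_zero z'

lemma TFm.tensor_finsupp (hN : TFm a N) : TFm a (N ⊗[R] (M →₀ R)) := by
  classical
  have h1 : TFm a (M →₀ N) := TFm.finsupp M hN
  have e : N ⊗[R] (M →₀ R) ≃ₗ[R] (M →₀ N) := TensorProduct.finsuppScalarRight R R N M
  intro x hx
  apply e.injective
  rw [map_zero]
  exact h1 _ (by rw [← map_smul, hx, map_zero])

lemma IsModA.tf_tensor (h : IsModA a R0) (hM : TFm a M) (hN : TFm a N) [Module.Flat R0 (R0 ⊗[R] N)] :
    TFm a (N ⊗[R] M) := by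
  obtain ⟨Z, F, _, _, _, _, k, l, hk, hkl, hl, hF⟩ :
    ∃ (Z F : Type u) (_ : AddCommGroup Z) (_ : AddCommGroup F) (_ : Module R Z) (_ : Module R F)
      (k : Z →ₗ[R] F) (l : F →ₗ[R] M), Function.Injective k ∧ Function.Exact k l ∧
        Function.Surjective l ∧ TFm a (N ⊗[R] F) :=
    ⟨LinearMap.ker (Finsupp.linearCombination R (id : M → M)), M →₀ R, inferInstance, inferInstance,
      inferInstance, inferInstance, (LinearMap.ker (Finsupp.linearCombination R (id : M → M))).subtype,
      Finsupp.linearCombination R (id : M → M), Subtype.val_injective,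
      LinearMap.exact_subtype_ker_map _, Finsupp.linearCombination_id_surjective R M,
      TFm.tensor_finsupp hN⟩
  exact h.tf_tensor_aux k l hl hkl
    (baseChange_lTensor_injective k (h.baseChange_injective k l hk hkl hM)) hF

lemma IsModA.extend_step (h : IsModA a R0) (hR : TFm a R)
    {ι : Type*} (k : Z →ₗ[R] (ι →₀ R)) (r : R0 ⊗[R] (ι →₀ R) →ₗ[R0] R0 ⊗[R] Z)
    (hr : ∀ x, r (k.baseChange R0 x) = x) (g : Z →ₗ[R] R) :
    ∃ (G : (ι →₀ R) →ₗ[R] R) (g' : Z →ₗ[R] R), g = G ∘ₗ k + a • g' := by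
  have : ∀ i : ι, ∃ c : R, g.baseChange R0 (r (1 ⊗ₜ Finsupp.single i 1)) = 1 ⊗ₜ c := fun i => h.exists_tmul _
  choose c hc using this
  let G : (ι →₀ R) →ₗ[R] R := Finsupp.linearCombination R c
  have e1 : ∀ x : ι →₀ R, (1 : R0) ⊗ₜ[R] G x = g.baseChange R0 (r (1 ⊗ₜ x)) := by
    intro x
    induction x using Finsupp.induction_linear with
    | zero => simp only [map_zero, tmul_zero]
    | add x y hx hy => simp only [tmul_add, map_add, hx, hy]
    | single i b =>
      have : Finsupp.single i b = b • Finsupp.single i (1 : R) := by simp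
      have e2 : (1 : R0) ⊗ₜ[R] (b • Finsupp.single i (1 : R)) = algebraMap R R0 b • ((1 : R0) ⊗ₜ[R] Finsupp.single i (1 : R)) := by
        rw [← TensorProduct.smul_tmul, TensorProduct.smul_tmul', Algebra.smul_def, smul_eq_mul]
      rw [this, e2, r.map_smul, (g.baseChange R0).map_smul, hc]
      simp only [G, map_smul, Finsupp.linearCombination_single, one_smul]
      rw [← TensorProduct.smul_tmul, TensorProduct.smul_tmul', Algebra.smul_def, smul_eq_mul]
  have inj : Function.Injective (LinearMap.mulLeft R a) := by
    rw [injective_iff_map_eq_zero]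
    intro x hx
    exact hR x hx
  have mem : ∀ z, (g - G ∘ₗ k) z ∈ LinearMap.range (LinearMap.mulLeft R a) := by
    intro z
    have : (1 : R0) ⊗ₜ[R] ((g - G ∘ₗ k) z) = 0 := by
      have e3 := e1 (k z)
      have e4 := hr (1 ⊗ₜ z)
      rw [LinearMap.baseChange_tmul] at e4
      rw [e4, LinearMap.baseChange_tmul] at e3
      rw [LinearMap.sub_apply, tmul_sub, LinearMap.comp_apply, e3, sub_self]
    obtain ⟨y, hy⟩ := h.tmul_eq_zero _ this
    exact ⟨y, hy.symm⟩
  refine ⟨G, (LinearEquiv.ofInjective _ inj).symm.toLinearMap ∘ₗ LinearMap.codRestrict _ (g - G ∘ₗ k) mem, ?_⟩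
  ext z
  have e5 := congrArg Subtype.val ((LinearEquiv.ofInjective _ inj).apply_symm_apply ⟨_, mem z⟩)
  rw [LinearEquiv.ofInjective_apply] at e5
  have e6 : a • ((LinearEquiv.ofInjective _ inj).symm ⟨_, mem z⟩) = g z - G (k z) := e5
  rw [LinearMap.add_apply, LinearMap.smul_apply, LinearMap.comp_apply, LinearMap.comp_apply]
  exact (by rw [← sub_eq_iff_eq_add']; exact e6.symm)

lemma IsModA.extend (h : IsModA a R0) (hR : TFm a R) [hRc : IsAdicComplete (Ideal.span {a}) R]
    {ι : Type*} (k : Z →ₗ[R] (ι →₀ R)) (r : R0 ⊗[R] (ι →₀ R) →ₗ[R0] R0 ⊗[R] Z)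
    (hr : ∀ x, r (k.baseChange R0 x) = x) (g : Z →ₗ[R] R) :
    ∃ G : (ι →₀ R) →ₗ[R] R, G ∘ₗ k = g := by
  choose H T hHT using h.extend_step hR k r hr
  let gs : ℕ → (Z →ₗ[R] R) := fun n => Nat.rec g (fun _ g' => T g') n
  have hgs : ∀ n, gs n = H (gs n) ∘ₗ k + a • gs (n+1) := fun n => hHT _
  let P : ℕ → ((ι →₀ R) →ₗ[R] R) := fun n => ∑ m ∈ Finset.range n, a ^ m • H (gs m)
  have hP : ∀ n, g = P n ∘ₗ k + a ^ n • gs n := by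
    intro n
    induction n with
    | zero => simp [P, gs]
    | succ n ih =>
      rw [ih]
      simp only [P, Finset.sum_range_succ, LinearMap.add_comp]
      conv_lhs => rw [hgs n]
      rw [smul_add, pow_succ, mul_smul, LinearMap.smul_comp, add_assoc]
  have hPdiff : ∀ m n, m ≤ n → ∀ x, P n x - P m x ∈ (Ideal.span {a}) ^ m := by
    intro m n hmn x
    rw [Ideal.span_singleton_pow, Ideal.mem_span_singleton]
    induction n, hmn using Nat.le_induction with
    | base => simp
    | succ n hmn ih =>
      have : P (n+1) x - P m x = (P n x - P m x) + a ^ n * H (gs n) x := by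
        simp only [P, Finset.sum_range_succ, LinearMap.add_apply, LinearMap.smul_apply, smul_eq_mul]
        ring
      rw [this]
      exact dvd_add ih ((pow_dvd_pow a hmn).mul_right _)
  have lim : ∀ i : ι, ∃ L : R, ∀ n, P n (Finsupp.single i 1) - L ∈ (Ideal.span {a}) ^ n := by
    intro i
    obtain ⟨L, hL⟩ := IsPrecomplete.prec (I := Ideal.span {a}) (M := R) inferInstance
      (f := fun n => P n (Finsupp.single i 1)) (by
        intro m n hmn
        rw [SModEq.sub_mem, ← neg_sub, neg_mem_iff]
        simpa using hPdiff m n hmn _)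
    refine ⟨L, fun n => ?_⟩
    have := hL n
    rw [SModEq.sub_mem] at this
    simpa using this
  choose L hL using lim
  let G : (ι →₀ R) →ₗ[R] R := Finsupp.linearCombination R L
  have hG : ∀ n x, P n x - G x ∈ (Ideal.span {a}) ^ n := by
    intro n x
    induction x using Finsupp.induction_linear with
    | zero => simp
    | add x y hx hy =>
      have := add_mem hx hy
      rw [map_add, map_add]
      convert this using 1
      ring
    | single i b =>
      have e : Finsupp.single i b = b • Finsupp.single i (1 : R) := by simp
      rw [e, map_smul, map_smul, ← smul_sub]
      have := hL i n
      apply Submodule.smul_mem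
      simpa [G] using this
  refine ⟨G, ?_⟩
  ext z
  rw [← sub_eq_zero]
  apply IsHausdorff.haus (I := Ideal.span {a}) (M := R) inferInstance
  intro n
  rw [SModEq.zero]
  have e1 := hG n (k z)
  have e2 : g z = P n (k z) + a ^ n * gs n z := LinearMap.congr_fun (hP n) z
  have e3 : a ^ n * gs n z ∈ (Ideal.span {a}) ^ n := by
    rw [Ideal.span_singleton_pow]
    exact Ideal.mul_mem_right _ _ (Ideal.mem_span_singleton_self _)
  have : (G ∘ₗ k) z - g z = - ((P n (k z) - G (k z)) + a ^ n * gs n z) := by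
    rw [e2, LinearMap.comp_apply]; ring
  rw [this]
  simpa using (neg_mem (add_mem e1 e3))

end TF
section MainAlg
open TensorProduct

lemma flat_coker {A T C : Type u} [CommRing A] [CommRing T] [Algebra A T] [AddCommGroup C] [Module A C]
    [Module.FaithfullyFlat A T] (p : T →ₗ[A] C) (hp : Function.Surjective p)
    (hex : Function.Exact (algebraMap A T) p) : Module.Flat A C := by
  let μ : T ⊗[A] T →ₗ[T] T := TensorProduct.AlgebraTensorModule.lift
    (LinearMap.toSpanSingleton T (T →ₗ[A] T) LinearMap.id)
  have hμ : ∀ s t : T, μ (s ⊗ₜ t) = s * t := fun s t => by simp [μ]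
  let φ : T ⊗[A] T →ₗ[T] T ⊗[A] T := LinearMap.id - (LinearMap.toSpanSingleton T (T ⊗[A] T) (1 ⊗ₜ 1)) ∘ₗ μ
  have hφ : ∀ s t : T, φ (s ⊗ₜ t) = s ⊗ₜ t - (s * t) ⊗ₜ 1 := fun s t => by
    simp [φ, hμ, TensorProduct.smul_tmul']
  let P : T ⊗[A] T →ₗ[T] T ⊗[A] C := p.baseChange T
  have hP : Function.Surjective P := LinearMap.lTensor_surjective T hp
  have hex' : Function.Exact (Algebra.linearMap A T) p := hex
  have hker : LinearMap.ker P ≤ LinearMap.ker φ := by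
    intro x hx
    obtain ⟨y, rfl⟩ := (lTensor_exact T hex' hp x).1 hx
    rw [LinearMap.mem_ker]
    clear hx
    induction y with
    | zero => simp
    | add x y hx hy => rw [map_add, map_add, hx, hy, add_zero]
    | tmul t r =>
      rw [LinearMap.lTensor_tmul, hφ, Algebra.linearMap_apply, Algebra.algebraMap_eq_smul_one,
        TensorProduct.tmul_smul, TensorProduct.smul_tmul', mul_smul_comm, mul_one, sub_self]
  let e := P.quotKerEquivOfSurjective hP
  let i : T ⊗[A] C →ₗ[T] T ⊗[A] T := (LinearMap.ker P).liftQ φ hker ∘ₗ e.symm.toLinearMap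
  have hi : ∀ x, i (P x) = φ x := by
    intro x
    have : e.symm (P x) = (LinearMap.ker P).mkQ x := by
      rw [LinearEquiv.symm_apply_eq]; rfl
    show (LinearMap.ker P).liftQ φ hker (e.symm (P x)) = φ x
    rw [this]; rfl
  have p1 : p 1 = 0 := by simpa using hex.apply_apply_eq_zero 1
  have hPφ : ∀ x, P (φ x) = P x := by
    intro x
    induction x with
    | zero => simp
    | add x y hx hy => simp only [map_add, hx, hy]
    | tmul s t =>
      rw [hφ, map_sub]
      simp [P, p1]
  have : P ∘ₗ i = LinearMap.id := by
    ext x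
    obtain ⟨y, hy⟩ := hP (1 ⊗ₜ x)
    show P (i (1 ⊗ₜ x)) = 1 ⊗ₜ x
    rw [← hy, hi, hPφ]
  have : Module.Flat T (T ⊗[A] C) := Module.Flat.of_retract i P this
  exact Module.Flat.of_flat_tensorProduct A C T

lemma cpm_coker {A T C : Type u} [CommRing A] [CommRing T] [Algebra A T] [AddCommGroup C] [Module A C]
    (h : Algebra.FinitePresentation A T) (p : T →ₗ[A] C) (hp : Function.Surjective p)
    (hex : Function.Exact (algebraMap A T) p) : CPm A C := by
  refine (CPm.of_fp h).of_surj p hp ⟨{1}, Set.countable_singleton _, ?_⟩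
  ext x
  rw [Submodule.mem_span_singleton, LinearMap.mem_ker, hex]
  simp [Algebra.smul_def]

variable {R R0 S B : Type u} [CommRing R] [CommRing R0] [Algebra R R0] {a : R} [CommRing S] [Algebra R S]
  [AddCommGroup B] [Module R B]

lemma exact_bc (p : S →ₗ[R] B) (hp : Function.Surjective p)
    (hex : Function.Exact (algebraMap R S) p) :
    Function.Exact (algebraMap R0 (R0 ⊗[R] S)) (p.baseChange R0) := by
  have hex' : Function.Exact (Algebra.linearMap R S) p := hex
  have h := lTensor_exact R0 hex' hp
  intro x
  refine (h x).trans ⟨?_, ?_⟩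
  · rintro ⟨y, rfl⟩
    obtain ⟨z, rfl⟩ := (TensorProduct.rid R R0).symm.surjective y
    exact ⟨z, by simp⟩
  · rintro ⟨z, rfl⟩
    exact ⟨z ⊗ₜ 1, by simp⟩

lemma cancel_alg (h : IsModA a R0) (hinj : Function.Injective (algebraMap R0 (R0 ⊗[R] S)))
    (r : R) (s : S) (hs : algebraMap R S r = a • s) : ∃ r', r = a * r' := by
  rw [← h.ker]
  apply hinj
  rw [map_zero, Algebra.TensorProduct.algebraMap_apply, Algebra.algebraMap_self_apply]
  have : algebraMap R R0 r ⊗ₜ[R] (1 : S) = 1 ⊗ₜ (algebraMap R S r) := by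
    rw [Algebra.algebraMap_eq_smul_one, Algebra.algebraMap_eq_smul_one, TensorProduct.smul_tmul]
  rw [this, hs, h.smul_tmul]

lemma cancel_alg_pow (h : IsModA a R0) (hinj : Function.Injective (algebraMap R0 (R0 ⊗[R] S)))
    (hS : TFm a S) (n : ℕ) :
    ∀ (r : R) (s : S) (hs : algebraMap R S r = a ^ n • s), ∃ r', r = a ^ n * r' := by
  induction n with
  | zero => intro r s _; exact ⟨r, by simp⟩
  | succ n ih =>
    intro r s hs
    rw [pow_succ', mul_smul] at hs
    obtain ⟨r', rfl⟩ := cancel_alg h hinj r _ hs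
    have : algebraMap R S r' = a ^ n • s := by
      rw [← sub_eq_zero]
      apply hS
      rw [smul_sub, ← hs, map_mul, Algebra.smul_def, sub_self]
    obtain ⟨r'', rfl⟩ := ih r' s this
    exact ⟨r'', by ring⟩

/-- separated -/
def SEPm (a : R) (M : Type*) [AddCommGroup M] [Module R M] : Prop :=
  ∀ x : M, (∀ n : ℕ, ∃ y : M, x = a ^ n • y) → x = 0

lemma SEPm.of_hausdorff [IsHausdorff (Ideal.span {a}) R] : SEPm a R := by
  intro x hx
  apply IsHausdorff.haus (I := Ideal.span {a}) (M := R) inferInstance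
  intro n
  rw [SModEq.zero]
  obtain ⟨y, rfl⟩ := hx n
  rw [Ideal.span_singleton_pow]
  simpa using Ideal.mul_mem_right y _ (Ideal.mem_span_singleton_self (a ^ n))

lemma alg_inj (h : IsModA a R0) (hinj : Function.Injective (algebraMap R0 (R0 ⊗[R] S)))
    (hS : TFm a S) [IsHausdorff (Ideal.span {a}) R] : Function.Injective (algebraMap R S) := by
  rw [injective_iff_map_eq_zero]
  intro r hr
  exact SEPm.of_hausdorff (a := a) r
    (fun n => cancel_alg_pow h hinj hS n r 0 (by rw [hr, smul_zero]))

lemma tf_coker (h : IsModA a R0) (hinj : Function.Injective (algebraMap R0 (R0 ⊗[R] S)))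
    (hS : TFm a S) (p : S →ₗ[R] B) (hp : Function.Surjective p)
    (hex : Function.Exact (algebraMap R S) p) : TFm a B := by
  intro x hx
  obtain ⟨s, rfl⟩ := hp x
  rw [← map_smul] at hx
  obtain ⟨r, hr⟩ := (hex _).1 hx
  obtain ⟨r', rfl⟩ := cancel_alg h hinj r s hr
  rw [hex]
  refine ⟨r', ?_⟩
  rw [← sub_eq_zero]
  apply hS
  rw [smul_sub, ← hr, map_mul, Algebra.smul_def, sub_self]

lemma sep_coker (h : IsModA a R0) (hinj : Function.Injective (algebraMap R0 (R0 ⊗[R] S)))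
    (hS : TFm a S) (hsep : SEPm a S) [IsAdicComplete (Ideal.span {a}) R]
    (p : S →ₗ[R] B) (hp : Function.Surjective p)
    (hex : Function.Exact (algebraMap R S) p) : SEPm a B := by
  intro x hx
  obtain ⟨s, rfl⟩ := hp x
  have : ∀ n : ℕ, ∃ (r : R) (t : S), s = algebraMap R S r + a ^ n • t := by
    intro n
    obtain ⟨y, hy⟩ := hx n
    obtain ⟨t, rfl⟩ := hp y
    have : p (s - a ^ n • t) = 0 := by rw [map_sub, hy, map_smul, sub_self]
    obtain ⟨r, hr⟩ := (hex _).1 this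
    exact ⟨r, t, by rw [hr]; simp⟩
  choose r t hrt using this
  obtain ⟨L, hL⟩ := IsPrecomplete.prec (I := Ideal.span {a}) (M := R) inferInstance
      (f := r) (by
        intro m n hmn
        rw [SModEq.sub_mem]
        have e : algebraMap R S (r m - r n) = a ^ m • (a ^ (n - m) • t n - t m) := by
          have e1 := hrt m
          have e2 := hrt n
          rw [smul_sub, ← mul_smul, ← pow_add, Nat.add_sub_cancel' hmn, map_sub]
          rw [← sub_eq_zero]
          have : s - s = 0 := sub_self s
          nth_rewrite 1 [e1] at this
          rw [e2] at this
          rw [← this]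
          abel
        obtain ⟨r', hr'⟩ := cancel_alg_pow h hinj hS m _ _ e
        rw [hr', Ideal.span_singleton_pow]
        simpa using Ideal.mul_mem_right r' _ (Ideal.mem_span_singleton_self (a ^ m)))
  rw [hex]
  refine ⟨L, ?_⟩
  rw [eq_comm, ← sub_eq_zero]
  apply hsep
  intro n
  have := hL n
  rw [SModEq.sub_mem, Ideal.span_singleton_pow] at this
  have : r n - L ∈ Ideal.span {a ^ n} := by simpa using this
  obtain ⟨c, hc⟩ := Ideal.mem_span_singleton'.1 this
  refine ⟨t n + algebraMap R S c, ?_⟩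
  have e3 : algebraMap R S (r n) - algebraMap R S L = a ^ n • algebraMap R S c := by
    rw [← map_sub, ← hc, map_mul, Algebra.smul_def, mul_comm]
  rw [smul_add, ← e3]
  nth_rewrite 1 [hrt n]
  abel

/-- `b ↦ 1 ⊗ b` injective -/
lemma j_inj (h : IsModA a R0) [Module.FaithfullyFlat R0 (R0 ⊗[R] S)] (hB : TFm a B)
    (hT : TFm a (S ⊗[R] B)) (hsep : SEPm a B) : Function.Injective (TensorProduct.mk R S B 1) := by
  rw [injective_iff_map_eq_zero]
  have key : ∀ b : B, (∃ w, (1 : S) ⊗ₜ[R] b = a • w) → ∃ b', b = a • b' := by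
    rintro b ⟨w, hw⟩
    apply h.tmul_eq_zero (R0 := R0)
    apply Module.FaithfullyFlat.tensorProduct_mk_injective (A := R0) (B := R0 ⊗[R] S) (R0 ⊗[R] B)
    rw [map_zero, TensorProduct.mk_apply]
    have := TensorProduct.AlgebraTensorModule.distribBaseChange_tmul R R0 (1 : S) b (1 : R0)
    rw [hw, h.smul_tmul, map_zero] at this
    exact this.symm
  have : ∀ n : ℕ, ∀ b : B, (1 : S) ⊗ₜ[R] b = 0 → ∃ b', b = a ^ n • b' := by
    intro n
    induction n with
    | zero => intro b _; exact ⟨b, by simp⟩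
    | succ n ih =>
      intro b hb
      obtain ⟨b', rfl⟩ := key b ⟨0, by rw [hb, smul_zero]⟩
      obtain ⟨b'', rfl⟩ := ih b' (by apply hT; rw [← TensorProduct.tmul_smul, hb])
      exact ⟨b'', by rw [pow_succ', mul_smul]⟩
  intro b hb
  exact hsep b (fun n => this n b hb)

lemma exists_cover (R : Type u) [CommRing R] (M : Type u) [AddCommGroup M] [Module R M] :
    ∃ (Z : Type u) (_ : AddCommGroup Z) (_ : Module R Z) (k : Z →ₗ[R] (M →₀ R)) (l : (M →₀ R) →ₗ[R] M),
      Function.Injective k ∧ Function.Exact k l ∧ Function.Surjective l :=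
  ⟨LinearMap.ker (Finsupp.linearCombination R (id : M → M)), inferInstance, inferInstance,
    (LinearMap.ker (Finsupp.linearCombination R (id : M → M))).subtype,
    Finsupp.linearCombination R (id : M → M), Subtype.val_injective,
    LinearMap.exact_subtype_ker_map _, Finsupp.linearCombination_id_surjective R M⟩

lemma proj_bc_ker {Z F Q : Type u} [AddCommGroup Z] [Module R Z] [AddCommGroup F] [Module R F]
    [AddCommGroup Q] [Module R Q] (h : IsModA a R0) (hQ : TFm a Q) (hc : CPm R0 (R0 ⊗[R] Q))
    [Module.Flat R0 (R0 ⊗[R] Q)] [Module.Projective R F] (k : Z →ₗ[R] F) (l : F →ₗ[R] Q)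
    (hk : Function.Injective k) (hkl : Function.Exact k l) (hl : Function.Surjective l) :
    Module.Projective R0 (R0 ⊗[R] Z) :=
  hc.projective_ker (k.baseChange R0) (l.baseChange R0) (LinearMap.lTensor_surjective R0 hl)
    (h.baseChange_injective k l hk hkl hQ) (lTensor_exact R0 hkl hl)

lemma retr_bc_ker {Y G Z : Type u} [AddCommGroup Z] [Module R Z] [AddCommGroup G] [Module R G]
    [AddCommGroup Y] [Module R Y] (h : IsModA a R0) (hZ : TFm a Z)
    [Module.Projective R0 (R0 ⊗[R] Z)] (k : Y →ₗ[R] G) (l : G →ₗ[R] Z)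
    (hk : Function.Injective k) (hkl : Function.Exact k l) (hl : Function.Surjective l) :
    ∃ r : R0 ⊗[R] G →ₗ[R0] R0 ⊗[R] Y, ∀ x, r (k.baseChange R0 x) = x := by
  obtain ⟨s, hs⟩ := Module.projective_lifting_property (l.baseChange R0) LinearMap.id
    (LinearMap.lTensor_surjective R0 hl)
  have hinj := h.baseChange_injective k l hk hkl hZ
  have hex : Function.Exact (k.baseChange R0) (l.baseChange R0) := lTensor_exact R0 hkl hl
  have mem : ∀ x, ((LinearMap.id : R0 ⊗[R] G →ₗ[R0] R0 ⊗[R] G) - s ∘ₗ l.baseChange R0) x ∈ LinearMap.range (k.baseChange R0) := by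
    intro x
    refine (hex _).1 ?_
    have := LinearMap.congr_fun hs (l.baseChange R0 x)
    rw [LinearMap.comp_apply] at this
    rw [LinearMap.sub_apply, map_sub, LinearMap.comp_apply, this]
    simp
  let e := LinearEquiv.ofInjective (k.baseChange R0) hinj
  refine ⟨e.symm.toLinearMap ∘ₗ LinearMap.codRestrict _ _ mem, fun x => ?_⟩
  show e.symm _ = x
  rw [LinearEquiv.symm_apply_eq]
  apply Subtype.ext
  have := hex.apply_apply_eq_zero x
  simp [e, this]

/-- factor a map through an injective map -/
lemma factor_inj {X Y Z W : Type*} [AddCommGroup X] [Module R X] [AddCommGroup Y] [Module R Y]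
    [AddCommGroup Z] [Module R Z] [AddCommGroup W] [Module R W] (j : Y →ₗ[R] Z) (q : Z →ₗ[R] W)
    (hj : Function.Injective j)
    (hjq : Function.Exact j q) (f : X →ₗ[R] Z) (hf : ∀ x, q (f x) = 0) :
    ∃ g : X →ₗ[R] Y, ∀ x, j (g x) = f x := by
  have mem : ∀ x, f x ∈ LinearMap.range j := fun x => (hjq _).1 (hf x)
  refine ⟨(LinearEquiv.ofInjective j hj).symm.toLinearMap ∘ₗ LinearMap.codRestrict _ f mem, fun x => ?_⟩
  have := congrArg Subtype.val ((LinearEquiv.ofInjective j hj).apply_symm_apply ⟨f x, mem x⟩)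
  exact this

lemma factor_surj {X Y Z W : Type*} [AddCommGroup X] [Module R X] [AddCommGroup Y] [Module R Y]
    [AddCommGroup Z] [Module R Z] [AddCommGroup W] [Module R W] (k : X →ₗ[R] Y) (l : Y →ₗ[R] Z)
    (hl : Function.Surjective l) (hkl : Function.Exact k l) (f : Y →ₗ[R] W) (hf : ∀ x, f (k x) = 0) :
    ∃ g : Z →ₗ[R] W, ∀ y, g (l y) = f y := by
  have hker : LinearMap.ker l ≤ LinearMap.ker f := by
    intro y hy
    obtain ⟨x, rfl⟩ := (hkl y).1 hy
    exact hf x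
  refine ⟨(LinearMap.ker l).liftQ f hker ∘ₗ (l.quotKerEquivOfSurjective hl).symm.toLinearMap, fun y => ?_⟩
  have : (l.quotKerEquivOfSurjective hl).symm (l y) = (LinearMap.ker l).mkQ y := by
    rw [LinearEquiv.symm_apply_eq]; rfl
  show (LinearMap.ker l).liftQ f hker ((l.quotKerEquivOfSurjective hl).symm (l y)) = f y
  rw [this]; rfl

lemma lift_map {Z : Type u} [AddCommGroup Z] [Module R Z] (h : IsModA a R0) (hR : TFm a R)
    [IsAdicComplete (Ideal.span {a}) R] (hZ : TFm a Z)
    [Module.Projective R0 (R0 ⊗[R] Z)] (hinj : Function.Injective (algebraMap R S))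
    (p : S →ₗ[R] B) (hp : Function.Surjective p)
    (hex : Function.Exact (algebraMap R S) p) (g : Z →ₗ[R] B) : ∃ n : Z →ₗ[R] S, p ∘ₗ n = g := by
  obtain ⟨Y, _, _, k, l, hk, hkl, hl⟩ := exists_cover R Z
  obtain ⟨r, hr⟩ := retr_bc_ker h hZ k l hk hkl hl
  obtain ⟨t, ht⟩ := Module.projective_lifting_property p (g ∘ₗ l) hp
  have ht' : ∀ x, p (t x) = g (l x) := LinearMap.congr_fun ht
  obtain ⟨c, hc⟩ := factor_inj (Algebra.linearMap R S) p hinj hex (t ∘ₗ k) (by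
    intro x
    rw [LinearMap.comp_apply, ht', hkl.apply_apply_eq_zero, map_zero])
  obtain ⟨G, hG⟩ := h.extend hR k r hr c
  have hG' : ∀ x, G (k x) = c x := LinearMap.congr_fun hG
  obtain ⟨n, hn⟩ := factor_surj k l hl hkl (t - Algebra.linearMap R S ∘ₗ G) (by
    intro x
    rw [LinearMap.sub_apply, LinearMap.comp_apply, hG', hc, LinearMap.comp_apply, sub_self])
  refine ⟨n, ?_⟩
  ext z
  obtain ⟨y, rfl⟩ := hl z
  rw [LinearMap.comp_apply, hn, LinearMap.sub_apply, map_sub, ht', LinearMap.comp_apply]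
  have : p (Algebra.linearMap R S (G y)) = 0 := hex.apply_apply_eq_zero _
  rw [this, sub_zero]

lemma main_alg_aux (h : IsModA a R0) (hR : TFm a R) (hS : TFm a S)
    [IsAdicComplete (Ideal.span {a}) R] (hsep : SEPm a S)
    [Module.FaithfullyFlat R0 (R0 ⊗[R] S)] (hfp : Algebra.FinitePresentation R0 (R0 ⊗[R] S))
    (p : S →ₗ[R] B) (hp : Function.Surjective p) (hex : Function.Exact (algebraMap R S) p) :
    IsUniversalDescent (algebraMap R S) := by
  have hinj0 : Function.Injective (algebraMap R0 (R0 ⊗[R] S)) := FaithfulSMul.algebraMap_injective _ _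
  have hi := alg_inj h hinj0 hS
  have hB : TFm a B := tf_coker h hinj0 hS p hp hex
  have hBsep : SEPm a B := sep_coker h hinj0 hS hsep p hp hex
  have hp0 : Function.Surjective (p.baseChange R0) := LinearMap.lTensor_surjective R0 hp
  have hex0 := exact_bc (R0 := R0) p hp hex
  have flB : Module.Flat R0 (R0 ⊗[R] B) := flat_coker (p.baseChange R0) hp0 hex0
  have cpB : CPm R0 (R0 ⊗[R] B) := cpm_coker hfp (p.baseChange R0) hp0 hex0
  have tSB : TFm a (S ⊗[R] B) := h.tf_tensor hB hS
  have tBB : TFm a (B ⊗[R] B) := h.tf_tensor hB hB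
  have hj := j_inj h hB tSB hBsep
  have hq : Function.Surjective (LinearMap.rTensor B p) := LinearMap.rTensor_surjective B hp
  have hex' : Function.Exact (Algebra.linearMap R S) p := hex
  have hjq : Function.Exact (TensorProduct.mk R S B 1) (LinearMap.rTensor B p) := by
    intro x
    refine (rTensor_exact B hex' hp x).trans ⟨?_, ?_⟩
    · rintro ⟨y, rfl⟩
      obtain ⟨z, rfl⟩ := (TensorProduct.lid R B).symm.surjective y
      exact ⟨z, by simp⟩
    · rintro ⟨z, rfl⟩
      exact ⟨1 ⊗ₜ z, by simp⟩
  have cpQ : CPm R0 (R0 ⊗[R] (B ⊗[R] B)) :=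
    (cpB.tensor cpB).of_equiv (TensorProduct.AlgebraTensorModule.distribBaseChange R R0 B B).symm
  have flQ : Module.Flat R0 (R0 ⊗[R] (B ⊗[R] B)) :=
    Module.Flat.of_linearEquiv (TensorProduct.AlgebraTensorModule.distribBaseChange R R0 B B)
  obtain ⟨Z, _, _, k, l, hk, hkl, hl⟩ := exists_cover R (B ⊗[R] B)
  have prZ : Module.Projective R0 (R0 ⊗[R] Z) := proj_bc_ker h tBB cpQ k l hk hkl hl
  have tZ : TFm a Z := by
    intro x hx
    apply hk
    rw [map_zero]
    exact (TFm.finsupp (B ⊗[R] B) hR) _ (by rw [← map_smul, hx, map_zero])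
  obtain ⟨m, hm⟩ := Module.projective_lifting_property (LinearMap.rTensor B p) l hq
  obtain ⟨g, hg⟩ := factor_inj _ _ hj hjq (m ∘ₗ k) (by
    intro x
    rw [LinearMap.comp_apply]
    exact (LinearMap.congr_fun hm (k x)).trans (hkl.apply_apply_eq_zero x))
  obtain ⟨n, hn⟩ := lift_map h hR tZ hi p hp hex g
  refine isUniversalDescent_of_data p (TensorProduct.mk R S B 1) (LinearMap.rTensor B p) k l m n hi hex hp
    hj hjq hq hk hkl hl hm ?_
  rw [hn]
  ext x
  exact hg x

lemma main_alg (h : IsModA a R0) (hR : TFm a R) (hS : TFm a S)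
    [IsAdicComplete (Ideal.span {a}) R] (hsep : SEPm a S)
    [Module.FaithfullyFlat R0 (R0 ⊗[R] S)] (hfp : Algebra.FinitePresentation R0 (R0 ⊗[R] S)) :
    IsUniversalDescent (algebraMap R S) := by
  refine main_alg_aux h hR hS hsep hfp (LinearMap.range (Algebra.linearMap R S)).mkQ
    (Submodule.mkQ_surjective _) ?_
  intro x
  simp

end MainAlg

section Final
open TensorProduct

lemma bcEquiv {R R0 S T : Type u} [CommRing R] [CommRing R0] [Algebra R R0] {a : R} [CommRing S] [Algebra R S]
    [CommRing T] [Algebra R0 T] [Algebra R T] [IsScalarTower R R0 T] (h : IsModA a R0) (θ : S →ₐ[R] T)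
    (hs : Function.Surjective θ) (hker : ∀ s, θ s = 0 → ∃ t, s = a • t) :
    Nonempty (R0 ⊗[R] S ≃ₐ[R0] T) := by
  let Φ : R0 ⊗[R] S →ₐ[R0] T := Algebra.TensorProduct.lift (Algebra.ofId R0 T) θ (fun _ _ => Commute.all _ _)
  have hΦ : ∀ s, Φ (1 ⊗ₜ s) = θ s := fun s => by simp [Φ]
  refine ⟨AlgEquiv.ofBijective Φ ⟨?_, ?_⟩⟩
  · rw [injective_iff_map_eq_zero]
    intro x hx
    obtain ⟨s, rfl⟩ := h.exists_tmul x
    rw [hΦ] at hx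
    obtain ⟨t, rfl⟩ := hker s hx
    exact h.smul_tmul t
  · intro t
    obtain ⟨s, rfl⟩ := hs t
    exact ⟨_, hΦ s⟩

lemma final_descent {R S : Type u} [CommRing R] [CommRing S] (f : R →+* S) (a : R) (b : S) (hb : f a = b)
    (φ : R ⧸ Ideal.span {a} →+* S ⧸ Ideal.span {b})
    (hφ : ∀ r, φ (Ideal.Quotient.mk _ r) = Ideal.Quotient.mk _ (f r))
    (hR : ∀ x : R, a * x = 0 → x = 0) (hS : ∀ x : S, b * x = 0 → x = 0)
    (hRc : IsAdicComplete (Ideal.span {a}) R)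
    (hff : letI := φ.toAlgebra
      Module.FaithfullyFlat (R ⧸ Ideal.span {a}) (S ⧸ Ideal.span {b}))
    (hfp : φ.FinitePresentation) : IsUniversalDescent f := by
  let I : Ideal S := ⨅ n : ℕ, Ideal.span {b ^ n}
  have memI : ∀ s, s ∈ I ↔ ∀ n : ℕ, ∃ t, s = b ^ n * t := by
    intro s
    simp only [I, Submodule.mem_iInf, Ideal.mem_span_singleton]
    rfl
  let S' := S ⧸ I
  let π' : S →+* S' := Ideal.Quotient.mk I
  have hπ' : ∀ s, π' s = 0 ↔ s ∈ I := fun s => Ideal.Quotient.eq_zero_iff_mem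
  have hπs : Function.Surjective π' := Ideal.Quotient.mk_surjective
  letI : Algebra R S' := (π'.comp f).toAlgebra
  have hsm : ∀ (r : R) (s : S), r • π' s = π' (f r * s) := fun r s => by
    rw [Algebra.smul_def, map_mul]; rfl
  apply IsUniversalDescent.of_comp f π'
  have h : IsModA a (R ⧸ Ideal.span {a}) := by
    refine ⟨Ideal.Quotient.mk_surjective, fun r => ?_⟩
    rw [Ideal.Quotient.algebraMap_eq, Ideal.Quotient.eq_zero_iff_mem, Ideal.mem_span_singleton]
    rfl
  have tR : TFm a R := hR
  have tS : TFm a S' := by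
    intro x hx
    obtain ⟨s, rfl⟩ := hπs x
    rw [hsm, hπ', memI, hb] at hx
    rw [hπ', memI]
    intro n
    obtain ⟨t, ht⟩ := hx (n+1)
    refine ⟨t, ?_⟩
    rw [← sub_eq_zero]
    apply hS
    rw [mul_sub, ht]; ring
  have sS : SEPm a S' := by
    intro x hx
    obtain ⟨s, rfl⟩ := hπs x
    rw [hπ', memI]
    intro n
    obtain ⟨y, hy⟩ := hx n
    obtain ⟨t, rfl⟩ := hπs y
    rw [hsm, ← sub_eq_zero, ← map_sub, hπ', memI, map_pow, hb] at hy
    obtain ⟨u, hu⟩ := hy n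
    exact ⟨t + u, by rw [mul_add, ← hu]; ring⟩
  letI : Algebra (R ⧸ Ideal.span {a}) (S ⧸ Ideal.span {b}) := φ.toAlgebra
  letI : Algebra R (S ⧸ Ideal.span {b}) := (φ.comp (Ideal.Quotient.mk _)).toAlgebra
  haveI : IsScalarTower R (R ⧸ Ideal.span {a}) (S ⧸ Ideal.span {b}) :=
    IsScalarTower.of_algebraMap_eq (fun _ => rfl)
  have hI : ∀ s ∈ I, Ideal.Quotient.mk (Ideal.span {b}) s = 0 := by
    intro s hs
    obtain ⟨t, ht⟩ := (memI s).1 hs 1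
    rw [Ideal.Quotient.eq_zero_iff_mem, Ideal.mem_span_singleton]
    exact ⟨t, by rw [ht, pow_one]⟩
  let θ : S' →ₐ[R] S ⧸ Ideal.span {b} :=
    { Ideal.Quotient.lift I (Ideal.Quotient.mk (Ideal.span {b})) hI with
      commutes' := fun r => (hφ r).symm }
  have hθ : ∀ s, θ (π' s) = Ideal.Quotient.mk (Ideal.span {b}) s := fun s => rfl
  obtain ⟨e⟩ := bcEquiv h θ (by
      intro t
      obtain ⟨s, rfl⟩ := Ideal.Quotient.mk_surjective t
      exact ⟨π' s, hθ s⟩) (by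
      intro x hx
      obtain ⟨s, rfl⟩ := hπs x
      rw [hθ, Ideal.Quotient.eq_zero_iff_mem, Ideal.mem_span_singleton] at hx
      obtain ⟨t, rfl⟩ := hx
      exact ⟨π' t, by rw [hsm, hb]⟩)
  haveI : Module.FaithfullyFlat (R ⧸ Ideal.span {a}) (S ⧸ Ideal.span {b}) := hff
  haveI : Module.FaithfullyFlat (R ⧸ Ideal.span {a}) ((R ⧸ Ideal.span {a}) ⊗[R] S') :=
    Module.FaithfullyFlat.of_linearEquiv _ _ e.toLinearEquiv
  haveI : Algebra.FinitePresentation (R ⧸ Ideal.span {a}) (S ⧸ Ideal.span {b}) := hfp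
  exact main_alg h tR tS sS (Algebra.FinitePresentation.equiv e.symm)

end Final

open IsUltrametricDist

/-- The ring of integers `O_K = {x : K | ‖x‖ ≤ 1}` of a nonarchimedean normed field. -/
def ringOfIntegers (K : Type u) [NontriviallyNormedField K] [IsUltrametricDist K] :
    Subring K where
  carrier := {x : K | ‖x‖ ≤ 1}
  one_mem' := by simp
  mul_mem' {a b} ha hb := by
    simpa [norm_mul] using mul_le_one₀ ha (norm_nonneg b) hb
  add_mem' {a b} ha hb := le_trans (norm_add_le_max a b) (max_le ha hb)
  zero_mem' := by simp
  neg_mem' {a} ha := by simpa using ha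

variable {K : Type u} [NontriviallyNormedField K] [IsUltrametricDist K] [CompleteSpace K]
  (π : ringOfIntegers K) {R S : Type u} [CommRing R] [CommRing S]
  [Algebra (ringOfIntegers K) R] [Algebra (ringOfIntegers K) S]

/-- The induced map `R/πR → S/πS` for an `O_K`-algebra map `f : R → S`. -/
def modPiMap (f : R →ₐ[ringOfIntegers K] S) :
    R ⧸ Ideal.span {algebraMap (ringOfIntegers K) R π} →+*
      S ⧸ Ideal.span {algebraMap (ringOfIntegers K) S π} :=
  Ideal.quotientMap _ f.toRingHom
    (by
      rw [Ideal.span_le, Set.singleton_subset_iff, SetLike.mem_coe, Ideal.mem_comap]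
      rw [show f.toRingHom (algebraMap (ringOfIntegers K) R π)
            = algebraMap (ringOfIntegers K) S π from f.commutes π]
      exact Ideal.subset_span (Set.mem_singleton _))

/-- Lemma 6.13(2): let `K` be a complete nonarchimedean field with ring of integers `O_K` and
`π ∈ O_K` a nonzero nonunit. Let `R → S` be a map of `π`-torsion-free `O_K`-algebras with `R`
`π`-adically complete. If `R/πR → S/πS` is faithfully flat and finitely presented, then
`R → S` is a universal descent morphism. -/
theorem stmt18 (hπ0 : π ≠ 0) (hπu : ¬IsUnit π)
    (f : R →ₐ[ringOfIntegers K] S)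
    (hRtf : ∀ x : R, algebraMap (ringOfIntegers K) R π * x = 0 → x = 0)
    (hStf : ∀ x : S, algebraMap (ringOfIntegers K) S π * x = 0 → x = 0)
    (hRc : IsAdicComplete (Ideal.span {algebraMap (ringOfIntegers K) R π}) R)
    (hff : letI := (modPiMap π f).toAlgebra
      Module.FaithfullyFlat (R ⧸ Ideal.span {algebraMap (ringOfIntegers K) R π})
        (S ⧸ Ideal.span {algebraMap (ringOfIntegers K) S π}))
    (hfp : (modPiMap π f).FinitePresentation) :
    IsUniversalDescent f.toRingHom := by
  exact final_descent f.toRingHom _ _ (f.commutes π) (modPiMap π f) (fun _ => rfl) hRtf hStf hRc hff hfp
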